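/- arXiv:1911.12283 — 5 statements merged into one kernel-verified Lean document; each statement's English description precedes it below -/
import Mathlib

section
/- Let F be a field of characteristic different from 2 and let (V, Q) be a 2-dimensional F-vector space with a nondegenerate quadratic form Q. Let d ∈ F^× be the determinant of the Gram matrix of the associated bilinear form [x,y] = Q(x+y) − Q(x) − Q(y) with respect to some basis of V, and assume that −d is not a square in F, so that K = F[t]/(t² + d) is a quadratic field extension of F with norm map Nm : K → F. Then there is a bijection between the set of orientations of (V, Q), i.e. F-algebra homomorphisms ι : K → End_F(V) satisfying Q(ι(α)x) = Nm(α)·Q(x) for all α ∈ K and x ∈ V, and the set of isotropic lines of the base-changed quadratic space (V ⊗_F K, Q_K), i.e. 1-dimensional K-subspaces of V ⊗_F K on which Q_K vanishes identically. -/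
/-!
Statement 0: Let `F` be a field of characteristic `≠ 2` and `(V, Q)` a 2-dimensional
nondegenerate quadratic space over `F`.  Let `d` be the Gram determinant of the associated
bilinear form with respect to some basis, and assume `-d` is not a square, so that
`K = F[t]/(t² + d)` is a quadratic field extension with norm `Nm : K → F`.  Then the set of
orientations of `(V, Q)` — `F`-algebra homomorphisms `ι : K → End_F V` with
`Q (ι α x) = Nm α ⬝ Q x` — is in bijection with the set of isotropic lines of `(V ⊗_F K, Q_K)`.
-/

open QuadraticMap Polynomial

/-- The quadratic étale algebra `K = F[t]/(t² + d)`. -/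
noncomputable abbrev QuadExt (F : Type*) [Field F] (d : F) : Type _ :=
  AdjoinRoot (X ^ 2 + C d)

/-- `Q` on coordinates. -/
lemma aux_Q {F V : Type*} [CommRing F] [AddCommGroup V] [Module F V]
    (Q : QuadraticForm F V) (v w : V) (x y : F) :
    Q (x • v + y • w) = Q v * x ^ 2 + polar Q v w * (x * y) + Q w * y ^ 2 := by
  rw [QuadraticMap.map_add Q, QuadraticMap.map_smul, QuadraticMap.map_smul,
    QuadraticMap.polar_smul_left, QuadraticMap.polar_smul_right]
  simp only [smul_eq_mul]
  ring

lemma aux_d {F V : Type*} [CommRing F] [AddCommGroup V] [Module F V]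
    (Q : QuadraticForm F V) (b : Module.Basis (Fin 2) F V) :
    (Matrix.of fun i j => QuadraticMap.polar Q (b i) (b j)).det =
      4 * Q (b 0) * Q (b 1) - polar Q (b 0) (b 1) ^ 2 := by
  rw [Matrix.det_fin_two]
  simp only [Matrix.of_apply, QuadraticMap.polar_self, QuadraticMap.polar_comm Q (b 1) (b 0)]
  simp only [nsmul_eq_mul, smul_eq_mul]
  push_cast
  ring

lemma aux_span {K M : Type*} [Field K] [AddCommGroup M] [Module K M] (W : Submodule K M)
    (hW : Module.finrank K W = 1) : ∃ x, x ≠ 0 ∧ W = Submodule.span K {x} := by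
  obtain ⟨⟨x, hxW⟩, hx0, hx⟩ := finrank_eq_one_iff'.1 hW
  refine ⟨x, fun h => hx0 (Subtype.ext h), le_antisymm ?_ ?_⟩
  · intro y hy
    obtain ⟨c, hc⟩ := hx ⟨y, hy⟩
    exact Submodule.mem_span_singleton.2 ⟨c, congrArg Subtype.val hc⟩
  · exact (Submodule.span_singleton_le_iff_mem _ _).2 hxW

/-- Isotropic lines correspond to signs. -/
lemma aux_lines {F V K : Type*} [Field F] [AddCommGroup V] [Module F V] [Field K] [Algebra F K]
    [Invertible (2 : F)]
    (Q : QuadraticForm F V) (b : Module.Basis (Fin 2) F V) (d : F)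
    (hd : d = 4 * Q (b 0) * Q (b 1) - polar Q (b 0) (b 1) ^ 2)
    (hA : Q (b 0) ≠ 0) (hd0 : d ≠ 0)
    (t : K) (ht : t ^ 2 = - algebraMap F K d) :
    Nonempty ({e : F // e ^ 2 = 1} ≃
        {W : Submodule K (TensorProduct F K V) //
          Module.finrank K ↥W = 1 ∧ ∀ x ∈ W, Q.baseChange K x = 0}) := by
  have h2 : (2 : F) ≠ 0 := Invertible.ne_zero 2
  have h2K : (2 : K) ≠ 0 := by
    have := (map_ne_zero (algebraMap F K)).2 h2
    rwa [map_ofNat] at this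
  haveI : Invertible (2 : K) := invertibleOfNonzero h2K
  set A := Q (b 0) with hAdef
  set B := polar Q (b 0) (b 1) with hBdef
  set C' := Q (b 1) with hCdef
  let f := algebraMap F K
  have hfA : f A ≠ 0 := (map_ne_zero f).2 hA
  have ht0 : t ≠ 0 := by
    rintro rfl
    apply hd0
    have : f d = 0 := by
      have h0 : (0 : K) ^ 2 = - f d := ht
      rw [zero_pow two_ne_zero] at h0
      exact neg_eq_zero.1 h0.symm
    exact (map_eq_zero f).1 this
  have hfd : f d = 4 * f A * f C' - f B ^ 2 := by
    rw [hd, map_sub, map_mul, map_mul, map_pow, map_ofNat]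
  let bK := b.baseChange K
  have hb (i) : bK i = 1 ⊗ₜ b i := b.baseChange_apply K i
  have hQK (x y : K) : Q.baseChange K (x • bK 0 + y • bK 1)
      = f A * x ^ 2 + f B * (x * y) + f C' * y ^ 2 := by
    rw [aux_Q]
    have h0 : Q.baseChange K (bK 0) = f A := by
      rw [hb, QuadraticForm.baseChange_tmul, mul_one, ← hAdef, Algebra.smul_def, mul_one]
    have h1 : Q.baseChange K (bK 1) = f C' := by
      rw [hb, QuadraticForm.baseChange_tmul, mul_one, ← hCdef, Algebra.smul_def, mul_one]
    have h01 : polar (Q.baseChange K) (bK 0) (bK 1) = f B := by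
      have := congrArg (fun g => g (bK 0) (bK 1)) (QuadraticForm.polarBilin_baseChange (A := K) Q)
      simp only [QuadraticMap.polarBilin_apply_apply] at this
      rw [this, hb, hb]
      simp [LinearMap.BilinForm.baseChange_tmul, Algebra.smul_def, f, hBdef]
    rw [h0, h1, h01]
  have hrepr (x : TensorProduct F K V) : x = bK.repr x 0 • bK 0 + bK.repr x 1 • bK 1 := by
    conv_lhs => rw [← bK.sum_repr x, Fin.sum_univ_two]
  have hinj (x y x' y' : K) (h : x • bK 0 + y • bK 1 = x' • bK 0 + y' • bK 1) :
      x = x' ∧ y = y' := by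
    have h' := congrArg bK.repr h
    constructor
    · simpa using congrArg (fun g => g 0) h'
    · simpa using congrArg (fun g => g 1) h'
  let w (e : F) : TensorProduct F K V := (- f B + f e * t) • bK 0 + (2 * f A) • bK 1
  have hw0 (e) : w e ≠ 0 := by
    intro h
    have := (hinj (- f B + f e * t) (2 * f A) 0 0 (by simpa [w] using h)).2
    exact (mul_ne_zero h2K hfA) this
  have hwQ (e : F) (he : e ^ 2 = 1) : Q.baseChange K (w e) = 0 := by
    have he' : f e ^ 2 = 1 := by rw [← map_pow, he, map_one]
    have ht' : t ^ 2 = - f d := ht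
    rw [hQK]
    linear_combination f A * t ^ 2 * he' + f A * ht' - f A * hfd
  refine ⟨Equiv.ofBijective (fun e => ⟨Submodule.span K {w e.1}, finrank_span_singleton (hw0 _), ?_⟩)
    ⟨?_, ?_⟩⟩
  · intro x hx
    obtain ⟨c, rfl⟩ := Submodule.mem_span_singleton.1 hx
    rw [QuadraticMap.map_smul, hwQ _ e.2, smul_zero]
  · rintro ⟨e, he⟩ ⟨e', he'⟩ h
    have h1 : Submodule.span K {w e} = Submodule.span K {w e'} := congrArg Subtype.val h
    have h3 : w e ∈ Submodule.span K {w e'} := h1 ▸ Submodule.mem_span_singleton_self _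
    obtain ⟨c, hc⟩ := Submodule.mem_span_singleton.1 h3
    simp only [w, smul_add, smul_smul] at hc
    obtain ⟨h4, h5⟩ := hinj _ _ _ _ hc
    have hc1 : c = 1 := by
      apply mul_right_cancel₀ (mul_ne_zero h2K hfA)
      rw [h5, one_mul]
    subst hc1
    have : f e = f e' := by
      apply mul_right_cancel₀ ht0
      linear_combination -h4
    exact Subtype.ext (f.injective this)
  · rintro ⟨W, hW, hWQ⟩
    obtain ⟨x, hx0', hWs⟩ := aux_span W hW
    have hxQ := hWQ x (hWs ▸ Submodule.mem_span_singleton_self x)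
    obtain ⟨p, q, hpq⟩ : ∃ p q, x = p • bK 0 + q • bK 1 := ⟨_, _, hrepr x⟩
    rw [hpq, hQK] at hxQ
    have hq : q ≠ 0 := by
      rintro rfl
      have : f A * p ^ 2 = 0 := by linear_combination hxQ
      have hp : p = 0 := by simpa [hfA] using this
      apply hx0'
      rw [hpq, hp]; simp
    have hfac : (2 * f A * p + f B * q - t * q) * (2 * f A * p + f B * q + t * q) = 0 := by
      have ht' : t ^ 2 = - f d := ht
      linear_combination 4 * f A * hxQ - q ^ 2 * ht' + q ^ 2 * hfd
    have key : ∃ e : F, e ^ 2 = 1 ∧ 2 * f A * p + f B * q = f e * t * q := by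
      rcases mul_eq_zero.1 hfac with h | h
      · exact ⟨1, by ring, by rw [map_one]; linear_combination h⟩
      · exact ⟨-1, by ring, by rw [map_neg, map_one]; linear_combination h⟩
    obtain ⟨e, he, hep⟩ := key
    refine ⟨⟨e, he⟩, Subtype.ext ?_⟩
    change Submodule.span K {w e} = W
    have hxw : (2 * f A) • x = q • w e := by
      simp only [hpq, w, smul_add, smul_smul]
      congr 2
      · linear_combination hep
      · ring
    have e1 := Submodule.span_singleton_smul_eq (IsUnit.mk0 _ hq) (w e)
    have e2 := Submodule.span_singleton_smul_eq (IsUnit.mk0 _ (mul_ne_zero h2K hfA)) x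
    rw [hWs, ← e1, ← e2, hxw]

lemma aux_basis {F : Type*} [Field F] (d : F) :
    ∃ β : Module.Basis (Fin 2) F (QuadExt F d), β 0 = 1 ∧ β 1 = AdjoinRoot.root (X ^ 2 + C d) := by
  have hm : (X ^ 2 + C d : F[X]).Monic := monic_X_pow_add_C d two_ne_zero
  have hdeg : (AdjoinRoot.powerBasis' hm).dim = 2 := by
    rw [AdjoinRoot.powerBasis'_dim]; exact natDegree_X_pow_add_C
  refine ⟨(AdjoinRoot.powerBasis' hm).basis.reindex (finCongr hdeg), ?_, ?_⟩
  · rw [Module.Basis.reindex_apply, PowerBasis.basis_eq_pow]; simp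
  · rw [Module.Basis.reindex_apply, PowerBasis.basis_eq_pow]; simp

lemma aux_root {F : Type*} [Field F] (d : F) :
    (AdjoinRoot.root (X ^ 2 + C d)) ^ 2 = - algebraMap F (QuadExt F d) d := by
  have := AdjoinRoot.eval₂_root (X ^ 2 + C d : F[X])
  simp only [eval₂_add, eval₂_pow, eval₂_X, eval₂_C] at this
  exact eq_neg_of_add_eq_zero_left this

lemma aux_norm {F : Type*} [Field F] (d p q : F) :
    Algebra.norm F (p • (1 : QuadExt F d) + q • AdjoinRoot.root (X ^ 2 + C d)) =
      p ^ 2 + d * q ^ 2 := by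
  obtain ⟨β, h0, h1⟩ := aux_basis d
  rw [Algebra.norm_eq_matrix_det β, Matrix.det_fin_two]
  simp only [Algebra.leftMulMatrix_eq_repr_mul, h0, h1]
  have e1 : (p • (1 : QuadExt F d) + q • AdjoinRoot.root (X ^ 2 + C d)) * 1 = p • β 0 + q • β 1 := by
    rw [h0, h1, mul_one]
  have e2 : (p • (1 : QuadExt F d) + q • AdjoinRoot.root (X ^ 2 + C d)) *
      AdjoinRoot.root (X ^ 2 + C d) = (-(d * q)) • β 0 + p • β 1 := by
    rw [h0, h1]
    have := aux_root d
    simp only [Algebra.smul_def, map_neg, map_mul]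
    linear_combination (algebraMap F (QuadExt F d) q) * this
  rw [e1, e2]
  simp
  ring

/-- Orientations correspond to signs. -/
lemma aux_orient {F V : Type*} [Field F] [AddCommGroup V] [Module F V]
    (h2 : (2 : F) ≠ 0)
    (Q : QuadraticForm F V) (b : Module.Basis (Fin 2) F V) (d : F)
    (hd : d = 4 * Q (b 0) * Q (b 1) - polar Q (b 0) (b 1) ^ 2)
    (hA : Q (b 0) ≠ 0) (hsq : ∀ s : F, s ^ 2 ≠ -d) :
    Nonempty ({e : F // e ^ 2 = 1} ≃
      {ι : QuadExt F d →ₐ[F] Module.End F V //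
          ∀ (α : QuadExt F d) (x : V), Q (ι α x) = Algebra.norm F α * Q x}) := by
  have hd0 : d ≠ 0 := by
    rintro rfl
    exact hsq 0 (by simp)
  have hQc := aux_Q Q (b 0) (b 1)
  set A := Q (b 0) with hAdef
  set B := polar Q (b 0) (b 1) with hBdef
  set C' := Q (b 1) with hCdef
  have hrepr (x : V) : ∃ p q : F, x = p • b 0 + q • b 1 :=
    ⟨b.repr x 0, b.repr x 1, by conv_lhs => rw [← b.sum_repr x, Fin.sum_univ_two]⟩
  have hinj (x y x' y' : F) (h : x • b 0 + y • b 1 = x' • b 0 + y' • b 1) :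
      x = x' ∧ y = y' := by
    have h' := congrArg b.repr h
    constructor
    · simpa using congrArg (fun g => g 0) h'
    · simpa using congrArg (fun g => g 1) h'
  have hK (α : QuadExt F d) : ∃ p q : F, α = p • 1 + q • AdjoinRoot.root (X ^ 2 + C d) := by
    obtain ⟨β, h0, h1⟩ := aux_basis d
    exact ⟨β.repr α 0, β.repr α 1,
      by conv_lhs => rw [← β.sum_repr α, Fin.sum_univ_two, h0, h1]⟩
  let J : Module.End F V := b.constr F ![(-B) • b 0 + (2 * A) • b 1, (-(2 * C')) • b 0 + B • b 1]
  have hJ0 : J (b 0) = (-B) • b 0 + (2 * A) • b 1 := by simp [J, Module.Basis.constr_basis]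
  have hJ1 : J (b 1) = (-(2 * C')) • b 0 + B • b 1 := by simp [J, Module.Basis.constr_basis]
  have hJJ : J * J = algebraMap F _ (-d) := by
    refine b.ext fun i => ?_
    fin_cases i
    · simp only [Fin.zero_eta, Module.End.mul_apply, hJ0, map_add, map_smul, hJ1,
        Module.algebraMap_end_apply, hd]
      module
    · simp only [Fin.mk_one, Module.End.mul_apply, hJ0, map_add, map_smul, hJ1,
        Module.algebraMap_end_apply, hd]
      module
  have hlift (e : F) (he : e ^ 2 = 1) :
      ∀ a ∈ Ideal.span {(X ^ 2 + C d : F[X])}, aeval (e • J) a = 0 := by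
    intro a ha
    obtain ⟨c, rfl⟩ := Ideal.mem_span_singleton.1 ha
    have : aeval (e • J) (X ^ 2 + C d : F[X]) = 0 := by
      rw [map_add, map_pow, aeval_X, aeval_C, _root_.smul_pow, he, pow_two J, hJJ, one_smul,
        ← map_add, neg_add_cancel, map_zero]
    rw [map_mul, this, zero_mul]
  let ι (e : F) (he : e ^ 2 = 1) : QuadExt F d →ₐ[F] Module.End F V :=
    Ideal.Quotient.liftₐ _ (aeval (e • J)) (hlift e he)
  have hι (e he) : ι e he (AdjoinRoot.root (X ^ 2 + C d)) = e • J :=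
    aeval_X (R := F) (e • J)
  refine ⟨Equiv.ofBijective (fun e => ⟨ι e.1 e.2, ?_⟩) ⟨?_, ?_⟩⟩
  · intro α x
    obtain ⟨p, q, rfl⟩ := hK α
    obtain ⟨x, y, rfl⟩ := hrepr x
    obtain ⟨e, he⟩ := e
    have hmap : ι e he (p • 1 + q • AdjoinRoot.root (X ^ 2 + C d)) = p • 1 + q • e • J := by
      rw [map_add, map_smul, map_smul, hι e he, map_one]
    rw [aux_norm, hmap, hQc]
    have : (p • (1 : Module.End F V) + q • e • J) (x • b 0 + y • b 1) =
        (p * x + q * e * (- B * x - 2 * C' * y)) • b 0 +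
          (p * y + q * e * (2 * A * x + B * y)) • b 1 := by
      simp only [LinearMap.add_apply, LinearMap.smul_apply, Module.End.one_apply, map_add,
        map_smul, hJ0, hJ1]
      module
    rw [this, hQc, hd]
    linear_combination (A * (- B * x - 2 * C' * y) ^ 2 +
      B * ((- B * x - 2 * C' * y) * (2 * A * x + B * y)) + C' * (2 * A * x + B * y) ^ 2) *
      q ^ 2 * he
  · rintro ⟨e, he⟩ ⟨e', he'⟩ h
    have h1 : ι e he = ι e' he' := congrArg Subtype.val h
    have h3 := congrArg (fun g => g (AdjoinRoot.root (X ^ 2 + C d)) (b 0)) h1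
    simp only [hι, LinearMap.smul_apply, hJ0, smul_add, smul_smul] at h3
    exact Subtype.ext (mul_right_cancel₀ (mul_ne_zero h2 hA) (hinj _ _ _ _ h3).2)
  · rintro ⟨φ, hφ⟩
    set T := φ (AdjoinRoot.root (X ^ 2 + C d)) with hT
    have hTT (x : V) : T (T x) = (-d) • x := by
      have := congrArg φ (aux_root d)
      rw [map_pow, ← hT, map_neg, AlgHom.commutes, pow_two] at this
      have h3 := congrArg (fun g => g x) this
      simpa using h3
    have hN (p q : F) (x : V) : Q (p • x + q • T x) = (p ^ 2 + d * q ^ 2) * Q x := by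
      have hmap : φ (p • 1 + q • AdjoinRoot.root (X ^ 2 + C d)) = p • 1 + q • T := by
        rw [map_add, map_smul, map_smul, map_one]
      rw [← aux_norm, ← hφ, hmap]
      rfl
    have hskew (x : V) : polar Q x (T x) = 0 := by
      have h1 := hN 1 1 x
      have h3 := hN 0 1 x
      simp only [one_smul, zero_smul, zero_add] at h1 h3
      rw [polar, h1, h3]; ring
    obtain ⟨u, v, h0⟩ := hrepr (T (b 0))
    obtain ⟨s, w, h1⟩ := hrepr (T (b 1))
    have pol (x y x' y' : F) : polar Q (x • b 0 + y • b 1) (x' • b 0 + y' • b 1)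
        = 2 * A * x * x' + B * (x * y' + y * x') + 2 * C' * y * y' := by
      have : (x • b 0 + y • b 1) + (x' • b 0 + y' • b 1) = (x + x') • b 0 + (y + y') • b 1 := by
        module
      rw [polar, this, hQc, hQc, hQc]; ring
    have k0 : 2 * A * u + B * v = 0 := by
      have h3 := hskew ((1 : F) • b 0 + (0 : F) • b 1)
      have h4 : T ((1 : F) • b 0 + (0 : F) • b 1) = u • b 0 + v • b 1 := by simp [h0]
      rw [h4, pol] at h3
      linear_combination h3
    have k1 : B * s + 2 * C' * w = 0 := by
      have h3 := hskew ((0 : F) • b 0 + (1 : F) • b 1)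
      have h4 : T ((0 : F) • b 0 + (1 : F) • b 1) = s • b 0 + w • b 1 := by simp [h1]
      rw [h4, pol] at h3
      linear_combination h3
    have k2 : 2 * A * s + B * w + B * u + 2 * C' * v = 0 := by
      have h3 := hskew ((1 : F) • b 0 + (1 : F) • b 1)
      have h4 : T ((1 : F) • b 0 + (1 : F) • b 1) = (u + s) • b 0 + (v + w) • b 1 := by
        simp only [map_add, map_smul, h0, h1]; module
      rw [h4, pol] at h3
      linear_combination h3 - k0 - k1
    have hsq0 := hTT (b 0)
    have h5 : T (T (b 0)) = (u ^ 2 + v * s) • b 0 + (u * v + v * w) • b 1 := by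
      rw [h0]; simp only [map_add, map_smul, h0, h1]; module
    obtain ⟨m0, m1⟩ := hinj (u ^ 2 + v * s) (u * v + v * w) (-d) 0
      (by rw [← h5, hsq0]; module)
    have hv : v ≠ 0 := by
      rintro rfl
      exact hsq u (by linear_combination m0)
    have hw : w = -u := by
      apply mul_left_cancel₀ hv
      linear_combination m1
    subst hw
    have h2A : 2 * A ≠ 0 := mul_ne_zero h2 hA
    have hs : A * s = - C' * v := by
      apply mul_left_cancel₀ h2
      linear_combination k2
    obtain ⟨e, rfl⟩ : ∃ e, v = e * (2 * A) := ⟨v / (2 * A), by field_simp⟩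
    have hu : u = - e * B := by
      apply mul_left_cancel₀ h2A
      linear_combination k0
    have hs' : s = - e * (2 * C') := by
      apply mul_left_cancel₀ hA
      linear_combination hs
    have he : e ^ 2 = 1 := by
      apply mul_right_cancel₀ hd0
      rw [hu, hs'] at m0
      linear_combination e ^ 2 * hd - m0
    refine ⟨⟨e, he⟩, Subtype.ext ?_⟩
    change ι e he = φ
    apply AdjoinRoot.algHom_ext
    refine (hι e he).trans ?_
    rw [← hT]
    refine b.ext fun i => ?_
    fin_cases i
    · simp only [Fin.zero_eta, LinearMap.smul_apply, hJ0, h0, hu]; module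
    · simp only [Fin.mk_one, LinearMap.smul_apply, hJ1, h1, hu, hs']; module

theorem statement_0 {F V : Type*} [Field F] [AddCommGroup V] [Module F V]
    (h2 : (2 : F) ≠ 0)
    (Q : QuadraticForm F V)
    (hQ : LinearMap.SeparatingLeft (QuadraticMap.polarBilin Q))
    (b : Module.Basis (Fin 2) F V) (d : F)
    (hd : d = (Matrix.of fun i j => QuadraticMap.polar Q (b i) (b j)).det)
    (hsq : ∀ s : F, s ^ 2 ≠ -d) :
    letI : Invertible (2 : F) := invertibleOfNonzero h2
    Nonempty
      ({ι : QuadExt F d →ₐ[F] Module.End F V //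
          ∀ (α : QuadExt F d) (x : V), Q (ι α x) = Algebra.norm F α * Q x} ≃
        {W : Submodule (QuadExt F d) (TensorProduct F (QuadExt F d) V) //
          Module.finrank (QuadExt F d) ↥W = 1 ∧
            ∀ x ∈ W, Q.baseChange (QuadExt F d) x = 0}) := by
  letI : Invertible (2 : F) := invertibleOfNonzero h2
  rw [aux_d] at hd
  have hA : Q (b 0) ≠ 0 := by
    intro h
    apply hsq (polar Q (b 0) (b 1))
    rw [hd, h]; ring
  have hd0 : d ≠ 0 := by
    rintro rfl
    exact hsq 0 (by simp)
  obtain ⟨E1⟩ := aux_orient h2 Q b d hd hA hsq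
  haveI : Fact (Irreducible (X ^ 2 + C d : F[X])) := by
    refine ⟨?_⟩
    have h := (X_pow_sub_C_irreducible_iff_of_prime Nat.prime_two (a := -d)).2 hsq
    simpa using h
  obtain ⟨E2⟩ := aux_lines (K := QuadExt F d) Q b d hd hA hd0 _ (aux_root d)
  exact ⟨E1.symm.trans E2⟩
end

section
/- Let p be an odd prime and (V, Q) a nondegenerate quadratic space over ℚ_p of dimension n ≥ 3. If L₁ and L₂ are two self-dual lattices in V, then there exists a ℚ_p-linear isometry g of (V, Q) with det(g) = 1 such that g(L₁) = L₂; that is, the special orthogonal group SO(V)(ℚ_p) acts transitively on the set of self-dual lattices in V. -/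
/-!
Statement 1: Let `p` be an odd prime and `(V, Q)` a nondegenerate quadratic space over `ℚ_p`
of dimension `n ≥ 3`.  If `L₁` and `L₂` are two self-dual `ℤ_p`-lattices in `V`, then there is a
`ℚ_p`-linear isometry `g` of `(V, Q)` with `det g = 1` and `g (L₁) = L₂`; i.e. `SO(V)(ℚ_p)` acts
transitively on the set of self-dual lattices in `V`.
-/

open QuadraticMap

variable (p : ℕ) [Fact p.Prime]
variable {V : Type*} [AddCommGroup V] [Module ℚ_[p] V] [Module ℤ_[p] V]
  [IsScalarTower ℤ_[p] ℚ_[p] V]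

/-- `L` is a `ℤ_p`-lattice in the `ℚ_p`-vector space `V`:
a finitely generated `ℤ_p`-submodule spanning `V` over `ℚ_p`. -/
def IsLattice (L : Submodule ℤ_[p] V) : Prop :=
  L.FG ∧ Submodule.span ℚ_[p] (L : Set V) = ⊤

/-- The dual lattice `L^∨ = {x ∈ V : [x, y] ∈ ℤ_p for all y ∈ L}` with respect to the
bilinear form `[x, y] = Q (x + y) - Q x - Q y` associated to `Q`. -/
noncomputable def dualLattice (Q : QuadraticForm ℚ_[p] V) (L : Submodule ℤ_[p] V) :
    Submodule ℤ_[p] V :=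
  LinearMap.BilinForm.dualSubmodule (QuadraticMap.polarBilin Q) L

open Module

theorem aux_sqrt (hp : p ≠ 2) (u : ℤ_[p]) (hu : ‖u - 1‖ < 1) : ∃ s : ℤ_[p], s ^ 2 = u := by
  have h2 : ‖(2 : ℤ_[p])‖ = 1 := by
    have := (PadicInt.norm_natCast_eq_one_iff (p := p) (n := 2)).2
      ((Nat.coprime_primes (Fact.out : p.Prime) Nat.prime_two).2 hp)
    simpa using this
  have := hensels_lemma (p := p) (R := ℤ_[p])
    (F := Polynomial.X ^ 2 - Polynomial.C u) (a := 1) (by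
      simp [h2, one_add_one_eq_two]
      rw [norm_sub_rev]; exact hu)
  obtain ⟨z, hz, -⟩ := this
  exact ⟨z, by simpa [sub_eq_zero] using hz⟩

theorem aux_two (hp : p ≠ 2) : IsUnit (2 : ℤ_[p]) := by
  rw [PadicInt.isUnit_iff]
  have := (PadicInt.norm_natCast_eq_one_iff (p := p) (n := 2)).2
      ((Nat.coprime_primes (Fact.out : p.Prime) Nat.prime_two).2 hp)
  simpa using this

theorem aux_binary (hp : p ≠ 2) (a b : ℤ_[p]) (ha : IsUnit a) (hb : IsUnit b) :
    ∃ x y : ℤ_[p], a * x ^ 2 + b * y ^ 2 = 1 := by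
  have ha' : PadicInt.toZMod a ≠ 0 := (ha.map PadicInt.toZMod).ne_zero
  have hb' : PadicInt.toZMod b ≠ 0 := (hb.map PadicInt.toZMod).ne_zero
  obtain ⟨x, y, hxy⟩ := FiniteField.exists_root_sum_quadratic
    (f := Polynomial.C (PadicInt.toZMod a) * Polynomial.X ^ 2 + Polynomial.C 0 * Polynomial.X
      + Polynomial.C (-1))
    (g := Polynomial.C (PadicInt.toZMod b) * Polynomial.X ^ 2 + Polynomial.C 0 * Polynomial.X
      + Polynomial.C 0)
    (Polynomial.degree_quadratic ha') (Polynomial.degree_quadratic hb')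
    (by rw [ZMod.card]; exact (Fact.out : p.Prime).eq_two_or_odd.resolve_left hp)
  obtain ⟨x, rfl⟩ := ZMod.ringHom_surjective (PadicInt.toZMod (p := p)) x
  obtain ⟨y, rfl⟩ := ZMod.ringHom_surjective (PadicInt.toZMod (p := p)) y
  have h0 : PadicInt.toZMod (a * x ^ 2 + b * y ^ 2 - 1) = 0 := by
    simp at hxy
    simp only [map_sub, map_add, map_mul, map_pow, map_one]
    linear_combination hxy
  have h1 : ‖(a * x ^ 2 + b * y ^ 2) - 1‖ < 1 := by
    rw [← RingHom.mem_ker, PadicInt.ker_toZMod] at h0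
    exact PadicInt.mem_nonunits.1 ((IsLocalRing.mem_maximalIdeal _).1 h0)
  obtain ⟨s, hs⟩ := aux_sqrt p hp _ h1
  have hsu : IsUnit s := by
    rw [← isUnit_pow_iff (n := 2) two_ne_zero, hs]
    by_contra hc
    have := (IsLocalRing.mem_maximalIdeal _).2 hc
    rw [← PadicInt.ker_toZMod, RingHom.mem_ker] at this
    rw [map_sub, this] at h0
    simp at h0
  obtain ⟨t, rfl⟩ := hsu
  refine ⟨x * ↑t⁻¹, y * ↑t⁻¹, ?_⟩
  have ht : (t : ℤ_[p]) * ↑t⁻¹ = 1 := t.mul_inv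
  calc _ = (a * x ^ 2 + b * y ^ 2) * (↑t⁻¹ : ℤ_[p]) ^ 2 := by ring
    _ = ((t : ℤ_[p]) * ↑t⁻¹) ^ 2 := by rw [← hs]; ring
    _ = 1 := by rw [ht]; ring

/-- orthogonal decomposition -/
theorem aux_cons {M : Type*} [AddCommGroup M] [Module ℤ_[p] M]
    (B : LinearMap.BilinForm ℤ_[p] M) (v : M) (hv : IsUnit (B v v)) {n : ℕ}
    (b' : Basis (Fin n) ℤ_[p] (LinearMap.ker (B v))) :
    ∃ b : Basis (Fin (n + 1)) ℤ_[p] M, b 0 = v ∧ ∀ i : Fin n, b i.succ = (b' i : M) := by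
  obtain ⟨u, hu⟩ := hv
  refine ⟨Basis.mkFinCons v b' ?_ ?_, ?_, ?_⟩
  · intro c x hx h
    have := congrArg (B v) h
    rw [map_add, LinearMap.mem_ker.1 hx, map_smul, ← hu] at this
    simpa using this
  · intro z
    refine ⟨-(↑u⁻¹ * B v z), ?_⟩
    rw [LinearMap.mem_ker, map_add, map_smul, ← hu, smul_eq_mul]
    linear_combination (-B v z) * u.mul_inv
  · simp
  · simp

theorem aux_compl_basis {M : Type*} [AddCommGroup M] [Module ℤ_[p] M]
    (B : LinearMap.BilinForm ℤ_[p] M) (v : M) (hv : IsUnit (B v v)) {n : ℕ}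
    (b : Basis (Fin (n + 1)) ℤ_[p] M) :
    Nonempty (Basis (Fin n) ℤ_[p] (LinearMap.ker (B v))) := by
  obtain ⟨m, b'⟩ := Submodule.basisOfPid b (LinearMap.ker (B v))
  obtain ⟨c, -⟩ := aux_cons p B v hv b'
  have h1 := Module.finrank_eq_card_basis c
  have h2 := Module.finrank_eq_card_basis b
  simp at h1 h2
  obtain rfl : m = n := by omega
  exact ⟨b'⟩

theorem aux_compl_surj {M : Type*} [AddCommGroup M] [Module ℤ_[p] M]
    (B : LinearMap.BilinForm ℤ_[p] M) (hs : ∀ x y, B x y = B y x)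
    (hsurj : ∀ f : M →ₗ[ℤ_[p]] ℤ_[p], ∃ x, B x = f) (v : M) (hv : IsUnit (B v v))
    (f : LinearMap.ker (B v) →ₗ[ℤ_[p]] ℤ_[p]) :
    ∃ x, B.restrict (LinearMap.ker (B v)) x = f := by
  obtain ⟨u, hu⟩ := hv
  let π : M →ₗ[ℤ_[p]] LinearMap.ker (B v) :=
    LinearMap.codRestrict _ (LinearMap.id - ((↑u⁻¹ : ℤ_[p]) • B v).smulRight v) (by
      intro c
      simp [← hu]
      linear_combination (-B v c) * u.mul_inv)
  obtain ⟨x, hx⟩ := hsurj (f.comp π)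
  have hπv : π v = 0 := by
    ext; simp [π, ← hu]
  have hπ : ∀ y : LinearMap.ker (B v), π y = y := by
    intro y
    ext; simp [π, LinearMap.mem_ker.1 y.2]
  refine ⟨⟨x, ?_⟩, ?_⟩
  · rw [LinearMap.mem_ker, hs, hx]; simp [hπv]
  · ext y
    change B x y = f y
    rw [hx]; simp [hπ]

theorem aux_unit_vec (hp : p ≠ 2) {M : Type*} [AddCommGroup M] [Module ℤ_[p] M]
    (B : LinearMap.BilinForm ℤ_[p] M) (hs : ∀ x y, B x y = B y x)
    (hsurj : ∀ f : M →ₗ[ℤ_[p]] ℤ_[p], ∃ x, B x = f) {n : ℕ}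
    (b : Basis (Fin (n + 1)) ℤ_[p] M) : ∃ v, IsUnit (B v v) := by
  by_contra! h
  have h' : ∀ v, B v v ∈ IsLocalRing.maximalIdeal ℤ_[p] := fun v =>
    (IsLocalRing.mem_maximalIdeal _).2 (h v)
  obtain ⟨x, hx⟩ := hsurj (b.coord 0)
  have h1 : B x (b 0) = 1 := by rw [hx]; simp
  have h2 : B (x + b 0) (x + b 0) - B x x - B (b 0) (b 0) = 2 := by
    simp only [map_add, LinearMap.add_apply, hs (b 0) x, h1]; ring
  have h3 : (2 : ℤ_[p]) ∈ IsLocalRing.maximalIdeal ℤ_[p] := by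
    rw [← h2]
    exact Ideal.sub_mem _ (Ideal.sub_mem _ (h' _) (h' _)) (h' _)
  exact (IsLocalRing.mem_maximalIdeal _).1 h3 (aux_two p hp)

theorem aux_one_vec (hp : p ≠ 2) {M : Type*} [AddCommGroup M] [Module ℤ_[p] M]
    (B : LinearMap.BilinForm ℤ_[p] M) (hs : ∀ x y, B x y = B y x)
    (hsurj : ∀ f : M →ₗ[ℤ_[p]] ℤ_[p], ∃ x, B x = f) {n : ℕ}
    (b : Basis (Fin (n + 2)) ℤ_[p] M) : ∃ v, B v v = 1 := by
  obtain ⟨v, hv⟩ := aux_unit_vec p hp B hs hsurj b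
  obtain ⟨b'⟩ := aux_compl_basis p B v hv b
  obtain ⟨w, hw⟩ := aux_unit_vec p hp (B.restrict (LinearMap.ker (B v)))
    (fun x y => hs _ _) (aux_compl_surj p B hs hsurj v hv) b'
  change IsUnit (B w w) at hw
  have hvw : B v w = 0 := w.2
  obtain ⟨x, y, hxy⟩ := aux_binary p hp _ _ hv hw
  refine ⟨x • v + y • (w : M), ?_⟩
  simp only [map_add, map_smul, LinearMap.add_apply, LinearMap.smul_apply, hs w v, hvw,
    smul_eq_mul]
  linear_combination hxy

theorem aux_diag (hp : p ≠ 2) (n : ℕ) : ∀ {M : Type*} [AddCommGroup M] [Module ℤ_[p] M]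
    (B : LinearMap.BilinForm ℤ_[p] M) (_ : ∀ x y, B x y = B y x)
    (_ : ∀ f : M →ₗ[ℤ_[p]] ℤ_[p], ∃ x, B x = f)
    (_ : Basis (Fin (n + 1)) ℤ_[p] M), ∃ (b : Basis (Fin (n + 1)) ℤ_[p] M) (d : ℤ_[p]),
      IsUnit d ∧ ∀ i j, B (b i) (b j) = if i = j then (if i = Fin.last n then d else 1) else 0 := by
  induction n with
  | zero =>
    intro M _ _ B hs hsurj b
    obtain ⟨v, hv⟩ := aux_unit_vec p hp B hs hsurj b
    obtain ⟨b'⟩ := aux_compl_basis p B v hv b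
    obtain ⟨c, hc, -⟩ := aux_cons p B v hv b'
    refine ⟨c, B v v, hv, ?_⟩
    intro i j
    fin_cases i; fin_cases j
    simp [hc]
  | succ n ih =>
    intro M _ _ B hs hsurj b
    obtain ⟨v, hv1⟩ := aux_one_vec p hp B hs hsurj b
    have hv : IsUnit (B v v) := by rw [hv1]; exact isUnit_one
    obtain ⟨b'⟩ := aux_compl_basis p B v hv b
    obtain ⟨c', d, hd, hc'⟩ := ih (B.restrict (LinearMap.ker (B v)))
      (fun x y => hs _ _) (aux_compl_surj p B hs hsurj v hv) b'
    obtain ⟨c, hc0, hc⟩ := aux_cons p B v hv c'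
    refine ⟨c, d, hd, ?_⟩
    intro i j
    have hk : ∀ i, B v (c' i : M) = 0 := fun i => (c' i).2
    refine Fin.cases ?_ (fun i => ?_) i <;> refine Fin.cases ?_ (fun j => ?_) j
    · simp [hc0, hv1, Fin.ext_iff]
    · simp [hc0, hc, hk, (Fin.succ_ne_zero j).symm]
    · simp [hc0, hc, hs _ v, hk]
    · rw [hc, hc]
      have := hc' i j
      change B (c' i) (c' j) = _ at this
      rw [this]
      simp [← Fin.succ_last]

theorem aux_lattice (hp : p ≠ 2) (Q : QuadraticForm ℚ_[p] V)
    (hQ : LinearMap.BilinForm.Nondegenerate (QuadraticMap.polarBilin Q)) (n : ℕ)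
    (hn : Module.finrank ℚ_[p] V = n + 1)
    (L : Submodule ℤ_[p] V) (hL : IsLattice p L) (hsd : dualLattice p Q L = L) :
    ∃ (b : Basis (Fin (n + 1)) ℚ_[p] V) (d : ℚ_[p]), ‖d‖ = 1 ∧
      Submodule.span ℤ_[p] (Set.range b) = L ∧
      ∀ i j, QuadraticMap.polar Q (b i) (b j) =
        if i = j then (if i = Fin.last n then d else 1) else 0 := by
  have : Submodule.IsLattice ℚ_[p] L := ⟨hL.1, hL.2⟩
  have : Module.Finite ℤ_[p] L := Submodule.IsLattice.finite ℚ_[p] L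
  have : Module.Free ℤ_[p] L := Submodule.IsLattice.free ℚ_[p] L
  let B' : LinearMap.BilinForm ℚ_[p] V := QuadraticMap.polarBilin Q
  have hle : L ≤ B'.dualSubmodule L := hsd.ge
  let B : LinearMap.BilinForm ℤ_[p] L :=
    (B'.dualSubmoduleToDual L).comp (Submodule.inclusion hle)
  have hB : ∀ x y : L, ((B x y : ℤ_[p]) : ℚ_[p]) = QuadraticMap.polar Q (x : V) (y : V) := by
    intro x y
    exact B'.dualSubmoduleParing_spec (Submodule.inclusion hle x) y
  have hs : ∀ x y, B x y = B y x := by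
    intro x y
    apply PadicInt.ext
    rw [hB, hB, QuadraticMap.polar_comm]
  have hspan : ∀ {ι : Type} (b : Basis ι ℤ_[p] L),
      Submodule.span ℤ_[p] (Set.range (b.extendOfIsLattice ℚ_[p])) = L := by
    intro ι b
    have : (b.extendOfIsLattice ℚ_[p] : ι → V) = L.subtype ∘ b := by
      ext i; simp
    rw [this, Set.range_comp, Submodule.span_image, b.span_eq, Submodule.map_subtype_top]
  have hfr : Module.finrank ℤ_[p] L = n + 1 := by
    rw [← hn, Module.finrank, Module.finrank, Submodule.IsLattice.rank' ℚ_[p] L]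
  let b0 : Basis (Fin (n + 1)) ℤ_[p] L := Module.finBasisOfFinrankEq _ _ hfr
  have hsurj : ∀ f : L →ₗ[ℤ_[p]] ℤ_[p], ∃ x, B x = f := by
    intro f
    let e := b0.extendOfIsLattice ℚ_[p]
    let e' := B'.dualBasis hQ e
    have hx : (∑ i, f (b0 i) • e' i) ∈ L := by
      have : Submodule.span ℤ_[p] (Set.range e') = L := by
        rw [← LinearMap.BilinForm.dualSubmodule_span_of_basis B' hQ e, hspan b0]
        exact hsd
      exact Submodule.sum_mem _ fun i _ => Submodule.smul_mem _ _
        (this.le (Submodule.subset_span ⟨i, rfl⟩))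
    refine ⟨⟨_, hx⟩, b0.ext fun j => ?_⟩
    apply PadicInt.ext
    rw [hB]
    change B' (∑ i, f (b0 i) • e' i) (b0 j : V) = _
    have hj : (b0 j : V) = e j := by simp [e]
    rw [hj, map_sum, LinearMap.sum_apply]
    have : ∀ i, B' (f (b0 i) • e' i) (e j) = if j = i then ((f (b0 i) : ℤ_[p]) : ℚ_[p]) else 0 := by
      intro i
      rw [← IsScalarTower.algebraMap_smul ℚ_[p] (f (b0 i)), map_smul, LinearMap.smul_apply,
        LinearMap.BilinForm.apply_dualBasis_left]
      simp
    rw [Finset.sum_congr rfl fun i _ => this i]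
    simp
  obtain ⟨b, d, hd, hb⟩ := aux_diag p hp n B hs hsurj b0
  refine ⟨b.extendOfIsLattice ℚ_[p], d, ?_, hspan b, ?_⟩
  · simpa using PadicInt.isUnit_iff.1 hd
  · intro i j
    rw [Basis.extendOfIsLattice_apply, Basis.extendOfIsLattice_apply, ← hB, hb]
    split_ifs <;> simp

theorem statement_1 (hp : p ≠ 2)
    (Q : QuadraticForm ℚ_[p] V)
    (hQ : LinearMap.BilinForm.Nondegenerate (QuadraticMap.polarBilin Q))
    (hn : 3 ≤ Module.finrank ℚ_[p] V)
    (L₁ L₂ : Submodule ℤ_[p] V)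
    (hL₁ : IsLattice p L₁) (hL₂ : IsLattice p L₂)
    (hsd₁ : dualLattice p Q L₁ = L₁) (hsd₂ : dualLattice p Q L₂ = L₂) :
    ∃ g : V ≃ₗ[ℚ_[p]] V, (∀ x, Q (g x) = Q x) ∧
      LinearMap.det (g : V →ₗ[ℚ_[p]] V) = 1 ∧
      ⇑g '' (L₁ : Set V) = (L₂ : Set V) := by
  obtain ⟨n, hn'⟩ : ∃ n, Module.finrank ℚ_[p] V = n + 1 := ⟨_, (Nat.sub_add_cancel (by omega)).symm⟩
  obtain ⟨b₁, d₁, hd₁, hs₁, hb₁⟩ := aux_lattice p hp Q hQ n hn' L₁ hL₁ hsd₁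
  obtain ⟨b₂, d₂, hd₂, hs₂, hb₂⟩ := aux_lattice p hp Q hQ n hn' L₂ hL₂ hsd₂
  let h : V ≃ₗ[ℚ_[p]] V := b₁.equiv b₂ (Equiv.refl _)
  let t : ℚ_[p] := LinearMap.det (h : V →ₗ[ℚ_[p]] V)
  have ht0 : t ≠ 0 := (LinearEquiv.isUnit_det' h).ne_zero
  let B : LinearMap.BilinForm ℚ_[p] V := QuadraticMap.polarBilin Q
  have hdet : d₂ = t ^ 2 * d₁ := by
    have e := congrArg Matrix.det (LinearMap.BilinForm.toMatrix_comp b₁ b₁ B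
      (h : V →ₗ[ℚ_[p]] V) (h : V →ₗ[ℚ_[p]] V))
    rw [Matrix.det_mul, Matrix.det_mul, Matrix.det_transpose, LinearMap.det_toMatrix] at e
    have e1 : LinearMap.BilinForm.toMatrix b₁ B =
        Matrix.diagonal (fun i => if i = Fin.last n then d₁ else 1) := by
      ext i j
      rw [LinearMap.BilinForm.toMatrix_apply, Matrix.diagonal_apply]
      exact hb₁ i j
    have e2 : LinearMap.BilinForm.toMatrix b₁ (B.comp (h : V →ₗ[ℚ_[p]] V) (h : V →ₗ[ℚ_[p]] V)) =
        Matrix.diagonal (fun i => if i = Fin.last n then d₂ else 1) := by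
      ext i j
      rw [LinearMap.BilinForm.toMatrix_apply, Matrix.diagonal_apply, LinearMap.BilinForm.comp_apply]
      have hh : ∀ i, (h : V →ₗ[ℚ_[p]] V) (b₁ i) = b₂ i := by intro i; simp [h]
      rw [hh, hh]
      exact hb₂ i j
    rw [e1, e2, Matrix.det_diagonal, Matrix.det_diagonal] at e
    simp only [Finset.prod_ite_eq', Finset.mem_univ, if_true] at e
    rw [e]; ring
  have htn : ‖t‖ = 1 := by
    have := congrArg norm hdet
    rw [norm_mul, norm_pow, hd₁, hd₂, mul_one] at this
    exact (pow_eq_one_iff_of_nonneg (norm_nonneg t) two_ne_zero).1 this.symm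
  let w : Fin (n + 1) → ℚ_[p]ˣ := fun i => if i = Fin.last n then (Units.mk0 t ht0)⁻¹ else 1
  let b₃ : Basis (Fin (n + 1)) ℚ_[p] V := b₂.unitsSMul w
  have hb₃ : ∀ i, b₃ i = (w i : ℚ_[p]) • b₂ i := fun i => by
    simp [b₃, Basis.unitsSMul_apply, Units.smul_def]
  let s : V ≃ₗ[ℚ_[p]] V := b₂.equiv b₃ (Equiv.refl _)
  have hsdet : LinearMap.det (s : V →ₗ[ℚ_[p]] V) = t⁻¹ := by
    rw [← LinearMap.det_toMatrix b₂]
    have : LinearMap.toMatrix b₂ b₂ (s : V →ₗ[ℚ_[p]] V) =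
        Matrix.diagonal (fun i => (w i : ℚ_[p])) := by
      ext i j
      rw [LinearMap.toMatrix_apply, Matrix.diagonal_apply]
      have : (s : V →ₗ[ℚ_[p]] V) (b₂ j) = (w j : ℚ_[p]) • b₂ j := by
        rw [← hb₃]; simp [s]
      rw [this, map_smul, Basis.repr_self]
      by_cases hij : i = j
      · subst hij; simp
      · simp [hij]
    rw [this, Matrix.det_diagonal]
    rw [Finset.prod_eq_single (Fin.last n)]
    · simp [w]
    · intro i _ hi
      simp [w, hi]
    · simp
  let g : V ≃ₗ[ℚ_[p]] V := h.trans s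
  have hg : ∀ i, g (b₁ i) = b₃ i := by intro i; simp [g, h, s]
  have hpol : ∀ i j, QuadraticMap.polar Q (b₃ i) (b₃ j) = QuadraticMap.polar Q (b₁ i) (b₁ j) := by
    intro i j
    rw [hb₃, hb₃, QuadraticMap.polar_smul_left, QuadraticMap.polar_smul_right, hb₁, hb₂]
    by_cases hij : i = j
    · subst hij
      by_cases hi : i = Fin.last n
      · simp [w, hi, hdet]
        field_simp
      · simp [w, hi]
    · simp [hij]
  have hBg : B.comp (g : V →ₗ[ℚ_[p]] V) (g : V →ₗ[ℚ_[p]] V) = B := by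
    refine LinearMap.BilinForm.ext_basis b₁ fun i j => ?_
    rw [LinearMap.BilinForm.comp_apply]
    change QuadraticMap.polar Q (g (b₁ i)) (g (b₁ j)) = QuadraticMap.polar Q (b₁ i) (b₁ j)
    rw [hg, hg, hpol]
  have hself : ∀ x, B x x = 2 * Q x := by
    intro x
    change QuadraticMap.polar Q x x = _
    rw [QuadraticMap.polar_self]; simp
  refine ⟨g, ?_, ?_, ?_⟩
  · intro x
    have e : B (g x) (g x) = B x x := by
      conv_rhs => rw [← hBg]
      rfl
    rw [hself, hself] at e
    exact mul_left_cancel₀ two_ne_zero e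
  · have : (g : V →ₗ[ℚ_[p]] V) = (s : V →ₗ[ℚ_[p]] V) ∘ₗ (h : V →ₗ[ℚ_[p]] V) := by
      ext x; rfl
    rw [this, LinearMap.det_comp, hsdet]
    exact inv_mul_cancel₀ ht0
  · have hwn : ∀ i, ‖(w i : ℚ_[p])‖ = 1 := by
      intro i
      by_cases hi : i = Fin.last n
      · simp [w, hi, htn]
      · simp [w, hi]
    have hspan : Submodule.span ℤ_[p] (Set.range b₃) = L₂ := by
      rw [← hs₂]
      apply le_antisymm
      · rw [Submodule.span_le]
        rintro _ ⟨i, rfl⟩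
        let c : ℤ_[p] := ⟨(w i : ℚ_[p]), (hwn i).le⟩
        have : b₃ i = c • b₂ i := by
          rw [hb₃, ← IsScalarTower.algebraMap_smul ℚ_[p] c (b₂ i)]
          rfl
        rw [this]
        exact Submodule.smul_mem _ _ (Submodule.subset_span ⟨i, rfl⟩)
      · rw [Submodule.span_le]
        rintro _ ⟨i, rfl⟩
        let c : ℤ_[p] := ⟨(w i : ℚ_[p])⁻¹, by rw [norm_inv, hwn i, inv_one]⟩
        have : b₂ i = c • b₃ i := by
          rw [hb₃, ← IsScalarTower.algebraMap_smul ℚ_[p] c (_ • b₂ i)]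
          change _ = (w i : ℚ_[p])⁻¹ • _
          rw [smul_smul, inv_mul_cancel₀ (w i).ne_zero, one_smul]
        rw [this]
        exact Submodule.smul_mem _ _ (Submodule.subset_span ⟨i, rfl⟩)
    let g' : V →ₗ[ℤ_[p]] V := (g : V →ₗ[ℚ_[p]] V).restrictScalars ℤ_[p]
    have hmap : Submodule.map g' L₁ = L₂ := by
      rw [← hs₁, Submodule.map_span, ← Set.range_comp, ← hspan]
      congr 2
      ext i
      exact hg i
    rw [← hmap]
    rfl
end

section
/- Let p be an odd prime and (V, Q) a nondegenerate quadratic space over ℚ_p of dimension n ≥ 3. Assume that V has unit determinant, i.e. the determinant of the Gram matrix of some (equivalently, any) basis of V lies in ℤ_p^× · (ℚ_p^×)², and that V contains no self-dual lattice. Then V contains an almost-self-dual lattice: a vertex lattice Λ with pΛ ⊆ Λ^∨ ⊆ Λ and dim_{𝔽_p}(Λ/Λ^∨) = 2 such that moreover every x ∈ Λ with Q(x) ∈ ℤ_p lies in Λ^∨. -/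
/-!
Statement 2: Let `p` be an odd prime and `(V, Q)` a nondegenerate quadratic space over `ℚ_p` of
dimension `n ≥ 3` with unit determinant, containing no self-dual lattice.  Then `V` contains an
almost-self-dual lattice: a vertex lattice `Λ` with `pΛ ⊆ Λ^∨ ⊆ Λ`, `dim_{𝔽_p} (Λ/Λ^∨) = 2`,
such that every `x ∈ Λ` with `Q x ∈ ℤ_p` lies in `Λ^∨`.
-/

open QuadraticMap

variable (p : ℕ) [Fact p.Prime]
variable {V : Type*} [AddCommGroup V] [Module ℚ_[p] V] [Module ℤ_[p] V]
  [IsScalarTower ℤ_[p] ℚ_[p] V]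

/-- There is a saturated chain (each step a covering in the lattice of `ℤ_p`-submodules) of
length `k` from `A` to `B`.  For `A ≤ B` this says exactly that the module `B/A` has length `k`
over `ℤ_p`; when `B/A` is killed by `p` this is the statement `dim_{𝔽_p} (B/A) = k`. -/
def chainLength (A B : Submodule ℤ_[p] V) (k : ℕ) : Prop :=
  ∃ f : Fin (k + 1) → Submodule ℤ_[p] V,
    f 0 = A ∧ f (Fin.last k) = B ∧ ∀ i : Fin k, f i.castSucc ⋖ f i.succ

set_option linter.unusedSectionVars false

section PadicAux

lemma aux_norm_two (hp : p ≠ 2) : ‖(2 : ℚ_[p])‖ = 1 := by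
  have h := (Padic.norm_natCast_eq_one_iff (p := p) (n := 2)).2
    ((Nat.coprime_primes (Fact.out : p.Prime) Nat.prime_two).2 hp)
  exact_mod_cast h

lemma aux_one_lt : (1 : ℝ) < p := by exact_mod_cast (Fact.out : p.Prime).one_lt

lemma aux_mem_one (q : ℚ_[p]) : q ∈ (1 : Submodule ℤ_[p] ℚ_[p]) ↔ ‖q‖ ≤ 1 := by
  rw [Submodule.mem_one]
  constructor
  · rintro ⟨y, rfl⟩
    exact y.2
  · intro h
    exact ⟨⟨q, h⟩, rfl⟩

lemma aux_lt_one (q : ℚ_[p]) : ‖q‖ < 1 ↔ ‖q‖ * p ≤ 1 := by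
  have h := Padic.norm_le_pow_iff_norm_lt_pow_add_one q (-1)
  have hp := aux_one_lt p
  simp only [zpow_neg, zpow_one, neg_add_cancel, zpow_zero] at h
  rw [← h, ← le_div_iff₀ (by linarith), one_div]

lemma aux_perturb (hp : p ≠ 2) {A c x : ℚ_[p]} (hA : ‖A‖ = p) (hx : ‖x‖ = 1)
    (h : ‖A * x ^ 2 + c‖ ≤ 1) : ∃ x' : ℚ_[p], ‖A * x' ^ 2 + c‖ = 1 := by
  rcases h.lt_or_eq with h | h
  · refine ⟨x + p, ?_⟩
    have hp1 := aux_one_lt p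
    have e : A * (x + p) ^ 2 + c = 2 * A * x * p + ((A * x ^ 2 + c) + A * p ^ 2) := by ring
    have h1 : ‖2 * A * x * p‖ = 1 := by
      simp only [norm_mul, aux_norm_two p hp, hA, hx, Padic.norm_p]
      field_simp
    have h2 : ‖A * p ^ 2‖ < 1 := by
      simp only [norm_mul, norm_pow, hA, Padic.norm_p]
      have : (p : ℝ) * ((p : ℝ)⁻¹) ^ 2 = (p : ℝ)⁻¹ := by field_simp
      rw [this]
      exact inv_lt_one_of_one_lt₀ hp1
    have h3 : ‖(A * x ^ 2 + c) + A * p ^ 2‖ < 1 :=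
      lt_of_le_of_lt (Padic.nonarchimedean _ _) (max_lt h h2)
    rw [e, Padic.add_eq_max_of_ne (by rw [h1]; exact h3.ne'), h1, max_eq_left h3.le]
  · exact ⟨x, h⟩

lemma aux_unit {A : ℚ_[p]} (hA : ‖A‖ = p) : ∃ u : ℤ_[p], (u : ℚ_[p]) = p * A ∧ ‖u‖ = 1 := by
  have hp1 := aux_one_lt p
  have : ‖(p : ℚ_[p]) * A‖ = 1 := by
    rw [norm_mul, hA, Padic.norm_p]; field_simp
  exact ⟨⟨p * A, this.le⟩, rfl, this⟩

lemma aux_toZMod_ne {u : ℤ_[p]} (hu : ‖u‖ = 1) : PadicInt.toZMod u ≠ 0 := by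
  intro h
  have : u ∈ RingHom.ker (PadicInt.toZMod : ℤ_[p] →+* ZMod p) := h
  rw [PadicInt.ker_toZMod, IsLocalRing.mem_maximalIdeal, PadicInt.mem_nonunits] at this
  linarith

open Polynomial in
lemma aux_solve (hp : p ≠ 2) {A C D : ℚ_[p]} (hA : ‖A‖ = p) (hC : ‖C‖ = p) (hD : ‖D‖ = p) :
    ∃ x y : ℚ_[p], ‖A * x ^ 2 + C * y ^ 2 + D‖ ≤ 1 := by
  obtain ⟨u, hu, hu1⟩ := aux_unit p hA
  obtain ⟨v, hv, hv1⟩ := aux_unit p hC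
  obtain ⟨w, hw, hw1⟩ := aux_unit p hD
  obtain ⟨a, b, hab⟩ := FiniteField.exists_root_sum_quadratic (R := ZMod p)
    (f := Polynomial.C (PadicInt.toZMod u) * X ^ 2 + Polynomial.C 0 * X + Polynomial.C 0)
    (g := Polynomial.C (PadicInt.toZMod v) * X ^ 2 + Polynomial.C 0 * X
      + Polynomial.C (PadicInt.toZMod w))
    (degree_quadratic (aux_toZMod_ne p hu1)) (degree_quadratic (aux_toZMod_ne p hv1))
    (by rw [ZMod.card]; exact (Fact.out : p.Prime).eq_two_or_odd.resolve_left hp)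
  have key : u * (a.val : ℤ_[p]) ^ 2 + v * (b.val : ℤ_[p]) ^ 2 + w ∈
      RingHom.ker (PadicInt.toZMod : ℤ_[p] →+* ZMod p) := by
    rw [RingHom.mem_ker]
    simp only [eval_add, eval_mul, eval_C, eval_pow, eval_X] at hab
    simp only [map_add, map_mul, map_pow, map_natCast, ZMod.natCast_zmod_val]
    linear_combination hab
  rw [PadicInt.ker_toZMod, IsLocalRing.mem_maximalIdeal, PadicInt.mem_nonunits,
    PadicInt.norm_lt_one_iff_dvd] at key
  obtain ⟨z, hz⟩ := key
  refine ⟨(a.val : ℚ_[p]), (b.val : ℚ_[p]), ?_⟩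
  have hz' := congrArg (fun t : ℤ_[p] => (t : ℚ_[p])) hz
  simp only [PadicInt.coe_add, PadicInt.coe_mul, PadicInt.coe_pow, PadicInt.coe_natCast,
    hu, hv, hw] at hz'
  have hp0 : (p : ℚ_[p]) ≠ 0 := by exact_mod_cast (Fact.out : p.Prime).ne_zero
  have : A * (a.val : ℚ_[p]) ^ 2 + C * (b.val : ℚ_[p]) ^ 2 + D = z := by
    apply mul_left_cancel₀ hp0
    linear_combination hz'
  rw [this]
  exact z.2

lemma aux_scale {a : ℚ_[p]} (ha : a ≠ 0) : ∃ t : ℚ_[p], t ≠ 0 ∧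
    (‖t ^ 2 * a‖ = 1 ∨ ‖t ^ 2 * a‖ = p) := by
  have hp0 : (p : ℚ_[p]) ≠ 0 := by exact_mod_cast (Fact.out : p.Prime).ne_zero
  have hpr : (p : ℝ) ≠ 0 := by exact_mod_cast (Fact.out : p.Prime).ne_zero
  set m : ℤ := -a.valuation with hm
  have hn : ∀ j : ℤ, ‖((p : ℚ_[p]) ^ j) ^ 2 * a‖ = (p : ℝ) ^ (m - 2 * j) := by
    intro j
    rw [norm_mul, norm_pow, Padic.norm_p_zpow, Padic.norm_eq_zpow_neg_valuation ha,
      ← zpow_natCast, ← zpow_mul, ← zpow_add₀ hpr]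
    congr 1
    push_cast
    omega
  refine ⟨(p : ℚ_[p]) ^ (m / 2), zpow_ne_zero _ hp0, ?_⟩
  rw [hn]
  rcases Int.emod_two_eq_zero_or_one m with h | h
  · left
    rw [show m - 2 * (m / 2) = 0 by omega, zpow_zero]
  · right
    rw [show m - 2 * (m / 2) = 1 by omega, zpow_one]

end PadicAux

section Families

/-- Orthogonal families whose self-pairings have norm `1` or `p`. -/
def AuxGood (B : LinearMap.BilinForm ℚ_[p] V) {n : ℕ} (e : Fin n → V) : Prop :=
  (∀ i j, i ≠ j → B (e i) (e j) = 0) ∧ ∀ i, ‖B (e i) (e i)‖ = 1 ∨ ‖B (e i) (e i)‖ = p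

/-- The set of indices whose self-pairing has norm `p`. -/
noncomputable def auxK (B : LinearMap.BilinForm ℚ_[p] V) {n : ℕ} (e : Fin n → V) :
    Finset (Fin n) :=
  Finset.univ.filter fun i => ‖B (e i) (e i)‖ = p

lemma aux_mem_K (B : LinearMap.BilinForm ℚ_[p] V) {n : ℕ} (e : Fin n → V) (i : Fin n) :
    i ∈ auxK p B e ↔ ‖B (e i) (e i)‖ = p := by simp [auxK]

lemma aux_swap {B : LinearMap.BilinForm ℚ_[p] V} (hB : ∀ x y, B x y = B y x) {n : ℕ}
    {e : Fin n → V} (he : AuxGood p B e) {i j : Fin n} (hij : i ≠ j)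
    (hi : ‖B (e i) (e i)‖ = p) (hj : ‖B (e j) (e j)‖ = p) (x y c : ℚ_[p])
    (hc : B (e i) (e i) * x ^ 2 + B (e j) (e j) * y ^ 2 = c) (hc1 : ‖c‖ = 1 ∨ ‖c‖ = p) :
    ∃ e' : Fin n → V, AuxGood p B e' ∧ B (e' i) (e' i) = c ∧ ‖B (e' j) (e' j)‖ = ‖c‖ ∧
      ∀ l, l ≠ i → l ≠ j → e' l = e l := by
  have hpr : (p : ℝ) ≠ 0 := by exact_mod_cast (Fact.out : p.Prime).ne_zero
  obtain ⟨ho, hn⟩ := he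
  set A := B (e i) (e i) with hA
  set C := B (e j) (e j) with hC
  have oij : B (e i) (e j) = 0 := ho i j hij
  have oji : B (e j) (e i) = 0 := ho j i hij.symm
  set f : V := x • e i + y • e j with hf
  set g : V := ((p : ℚ_[p]) * C * y) • e i - ((p : ℚ_[p]) * A * x) • e j with hg
  have hff : B f f = c := by
    simp only [hf, map_add, map_smul, LinearMap.add_apply, LinearMap.smul_apply, smul_eq_mul,
      oij, oji, ← hA, ← hC]
    linear_combination hc
  have hgg : B g g = (p : ℚ_[p]) ^ 2 * A * C * c := by
    simp only [hg, map_sub, map_smul, LinearMap.sub_apply, LinearMap.smul_apply, smul_eq_mul,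
      oij, oji, ← hA, ← hC]
    linear_combination (p : ℚ_[p]) ^ 2 * A * C * hc
  have hfg : B f g = 0 := by
    simp only [hf, hg, map_add, map_sub, map_smul, LinearMap.add_apply, LinearMap.sub_apply,
      LinearMap.smul_apply, smul_eq_mul, oij, oji, ← hA, ← hC]
    ring
  have hggn : ‖B g g‖ = ‖c‖ := by
    rw [hgg]
    simp only [norm_mul, norm_pow, Padic.norm_p, hi, hj]
    field_simp
  have hfl : ∀ l, l ≠ i → l ≠ j → B f (e l) = 0 := by
    intro l hli hlj
    simp [hf, ho i l hli.symm, ho j l hlj.symm]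
  have hgl : ∀ l, l ≠ i → l ≠ j → B g (e l) = 0 := by
    intro l hli hlj
    simp [hg, ho i l hli.symm, ho j l hlj.symm]
  let e' : Fin n → V := fun l => if l = i then f else if l = j then g else e l
  have e'i : e' i = f := by simp [e']
  have e'j : e' j = g := by simp [e', hij.symm]
  have e'l : ∀ l, l ≠ i → l ≠ j → e' l = e l := by
    intro l h1 h2; simp [e', h1, h2]
  refine ⟨e', ⟨?_, ?_⟩, by rw [e'i, hff], by rw [e'j, hggn], e'l⟩
  · intro k l hkl
    by_cases hki : k = i
    · subst hki
      rw [e'i]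
      by_cases hlj : l = j
      · subst hlj; rw [e'j, hfg]
      · rw [e'l l hkl.symm hlj, hfl l hkl.symm hlj]
    by_cases hkj : k = j
    · subst hkj
      rw [e'j]
      by_cases hli : l = i
      · subst hli; rw [e'i, hB, hfg]
      · rw [e'l l hli hkl.symm, hgl l hli hkl.symm]
    rw [e'l k hki hkj]
    by_cases hli : l = i
    · subst hli; rw [e'i, hB, hfl k hki hkj]
    by_cases hlj : l = j
    · subst hlj; rw [e'j, hB, hgl k hki hkj]
    rw [e'l l hli hlj, ho k l hkl]
  · intro k
    by_cases hki : k = i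
    · subst hki; rw [e'i, hff]; exact hc1
    by_cases hkj : k = j
    · subst hkj; rw [e'j, hggn]; exact hc1
    rw [e'l k hki hkj]; exact hn k

lemma aux_drop {B : LinearMap.BilinForm ℚ_[p] V} (hB : ∀ x y, B x y = B y x) {n : ℕ}
    {e : Fin n → V} (he : AuxGood p B e) {i j : Fin n} (hij : i ≠ j)
    (hi : ‖B (e i) (e i)‖ = p) (hj : ‖B (e j) (e j)‖ = p) (x y : ℚ_[p])
    (hc : ‖B (e i) (e i) * x ^ 2 + B (e j) (e j) * y ^ 2‖ = 1) :
    ∃ e' : Fin n → V, AuxGood p B e' ∧ (auxK p B e').card < (auxK p B e).card := by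
  have hp1 := aux_one_lt p
  obtain ⟨e', g, h1, h2, h3⟩ := aux_swap p hB he hij hi hj x y _ rfl (Or.inl hc)
  refine ⟨e', g, Finset.card_lt_card ?_⟩
  rw [Finset.ssubset_iff_of_subset]
  · refine ⟨i, (aux_mem_K p B e i).2 hi, ?_⟩
    rw [aux_mem_K, h1, hc]
    exact hp1.ne
  · intro l hl
    rw [aux_mem_K] at hl ⊢
    by_cases hli : l = i
    · subst hli; rw [h1, hc] at hl; exact absurd hl hp1.ne
    by_cases hlj : l = j
    · subst hlj; rw [h2, hc] at hl; exact absurd hl hp1.ne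
    rwa [h3 l hli hlj] at hl

lemma aux_drop3 (hp : p ≠ 2) {B : LinearMap.BilinForm ℚ_[p] V} (hB : ∀ x y, B x y = B y x) {n : ℕ}
    {e : Fin n → V} (he : AuxGood p B e) (h3 : 2 < (auxK p B e).card) :
    ∃ e' : Fin n → V, AuxGood p B e' ∧ (auxK p B e').card < (auxK p B e).card := by
  have hp1 := aux_one_lt p
  obtain ⟨i, j, l, hi, hj, hl, hij, hil, hjl⟩ := Finset.two_lt_card_iff.1 h3
  rw [aux_mem_K] at hi hj hl
  obtain ⟨x, y, hxy⟩ := aux_solve p hp hi hj hl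
  set c := B (e i) (e i) * x ^ 2 + B (e j) (e j) * y ^ 2 with hc
  have hcn : ‖c‖ = p := by
    by_contra hne
    rw [← hl] at hne
    rw [Padic.add_eq_max_of_ne hne, hl] at hxy
    have := le_max_right ‖c‖ (p : ℝ)
    linarith
  obtain ⟨e', g, h1, h2, h4⟩ := aux_swap p hB he hij hi hj x y c rfl (Or.inr hcn)
  have hle : (auxK p B e').card ≤ (auxK p B e).card := by
    apply Finset.card_le_card
    intro k hk
    rw [aux_mem_K] at hk ⊢
    by_cases hki : k = i
    · subst hki; exact hi
    by_cases hkj : k = j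
    · subst hkj; exact hj
    rwa [h4 k hki hkj] at hk
  have hl' : e' l = e l := h4 l hil.symm hjl.symm
  obtain ⟨x', hx'⟩ := aux_perturb p hp (A := c) (c := B (e l) (e l) * 1 ^ 2) (x := 1) hcn norm_one
    (by simpa using hxy)
  obtain ⟨e'', g', h5⟩ := aux_drop p hB g hil (by rw [h1, hcn]) (by rw [hl', hl]) x' 1
    (by rw [h1, hl']; exact hx')
  exact ⟨e'', g', h5.trans_le hle⟩

/-- A good family with the minimal number of indices of norm `p`. -/
lemma aux_minimal (hp : p ≠ 2) {B : LinearMap.BilinForm ℚ_[p] V} (hB : ∀ x y, B x y = B y x)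
    {n : ℕ} (hex : ∃ e : Fin n → V, AuxGood p B e) :
    ∃ e : Fin n → V, AuxGood p B e ∧ (auxK p B e).card ≤ 2 ∧
      ∀ i j, i ≠ j → i ∈ auxK p B e → j ∈ auxK p B e → ∀ x y : ℚ_[p], ‖x‖ ≤ 1 →
        ‖B (e i) (e i) * x ^ 2 + B (e j) (e j) * y ^ 2‖ ≤ 1 → ‖x‖ < 1 := by
  classical
  have hex' : ∃ k, ∃ e : Fin n → V, AuxGood p B e ∧ (auxK p B e).card = k := by
    obtain ⟨e, he⟩ := hex
    exact ⟨_, e, he, rfl⟩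
  obtain ⟨e, he, hk⟩ := Nat.find_spec hex'
  have hmin : ∀ e' : Fin n → V, AuxGood p B e' → ¬ (auxK p B e').card < (auxK p B e).card := by
    intro e' he' hlt
    rw [hk] at hlt
    exact Nat.find_min hex' hlt ⟨e', he', rfl⟩
  refine ⟨e, he, ?_, ?_⟩
  · by_contra h
    obtain ⟨e', he', h'⟩ := aux_drop3 p hp hB he (not_le.1 h)
    exact hmin e' he' h'
  · intro i j hij hi hj x y hx hxy
    by_contra hlt
    rw [aux_mem_K] at hi hj
    obtain ⟨x', hx'⟩ := aux_perturb p hp hi (le_antisymm hx (not_lt.1 hlt)) hxy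
    obtain ⟨e', he', h'⟩ := aux_drop p hB he hij hi hj x' y hx'
    exact hmin e' he' h'

end Families

section Lattices

lemma aux_smul (r : ℤ_[p]) (x : V) : r • x = (r : ℚ_[p]) • x :=
  (IsScalarTower.algebraMap_smul ℚ_[p] r x).symm

/-- Vectors with integral coordinates, those in `S` being divisible by `p`. -/
noncomputable def auxM {n : ℕ} (e : Module.Basis (Fin n) ℚ_[p] V) (S : Finset (Fin n)) :
    Submodule ℤ_[p] V where
  carrier := {x | ∀ i, ‖e.repr x i‖ ≤ 1 ∧ (i ∈ S → ‖e.repr x i‖ < 1)}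
  add_mem' := by
    intro x y hx hy i
    rw [map_add, Finsupp.add_apply]
    exact ⟨(Padic.nonarchimedean _ _).trans (max_le (hx i).1 (hy i).1),
      fun hi => (Padic.nonarchimedean _ _).trans_lt (max_lt ((hx i).2 hi) ((hy i).2 hi))⟩
  zero_mem' := by intro i; simp
  smul_mem' := by
    intro c x hx i
    rw [aux_smul, map_smul, Finsupp.smul_apply, smul_eq_mul, norm_mul]
    have hc : ‖(c : ℚ_[p])‖ ≤ 1 := c.2
    exact ⟨mul_le_one₀ hc (norm_nonneg _) (hx i).1,
      fun hi => (mul_le_of_le_one_left (norm_nonneg _) hc).trans_lt ((hx i).2 hi)⟩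

lemma aux_mem_M {n : ℕ} (e : Module.Basis (Fin n) ℚ_[p] V) (S : Finset (Fin n)) (x : V) :
    x ∈ auxM p e S ↔ ∀ i, ‖e.repr x i‖ ≤ 1 ∧ (i ∈ S → ‖e.repr x i‖ < 1) := Iff.rfl

lemma aux_basis_mem {n : ℕ} (e : Module.Basis (Fin n) ℚ_[p] V) (S : Finset (Fin n)) (i : Fin n)
    (hi : i ∉ S) : e i ∈ auxM p e S := by
  intro j
  rw [e.repr_self, Finsupp.single_apply]
  split_ifs with h
  · subst h; simp [hi]
  · simp

lemma aux_M_lattice {n : ℕ} (e : Module.Basis (Fin n) ℚ_[p] V) : IsLattice p (auxM p e ∅) := by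
  constructor
  · have : auxM p e ∅ = Submodule.span ℤ_[p] (Set.range e) := by
      apply le_antisymm
      · intro x hx
        rw [← e.sum_repr x]
        refine Submodule.sum_mem _ fun i _ => ?_
        obtain ⟨r, hr⟩ : ∃ r : ℤ_[p], (r : ℚ_[p]) = e.repr x i := ⟨⟨e.repr x i, (hx i).1⟩, rfl⟩
        rw [← hr, ← aux_smul]
        exact Submodule.smul_mem _ _ (Submodule.subset_span (Set.mem_range_self i))
      · rw [Submodule.span_le]
        rintro _ ⟨i, rfl⟩
        exact aux_basis_mem p e ∅ i (by simp)
    rw [this]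
    exact Submodule.fg_span (Set.finite_range _)
  · rw [eq_top_iff, ← e.span_eq]
    apply Submodule.span_mono
    rintro _ ⟨i, rfl⟩
    exact aux_basis_mem p e ∅ i (by simp)

lemma aux_covBy {n : ℕ} (e : Module.Basis (Fin n) ℚ_[p] V) (S : Finset (Fin n)) (i : Fin n)
    (hi : i ∉ S) : auxM p e (insert i S) ⋖ auxM p e S := by
  have hle : auxM p e (insert i S) ≤ auxM p e S := fun x hx j =>
    ⟨(hx j).1, fun hj => (hx j).2 (Finset.mem_insert_of_mem hj)⟩
  refine ⟨lt_of_le_not_ge hle fun h => ?_, ?_⟩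
  · have := ((h (aux_basis_mem p e S i hi)) i).2 (Finset.mem_insert_self _ _)
    simp at this
  · intro N h1 h2
    obtain ⟨x, hxN, hx⟩ := SetLike.exists_of_lt h1
    have hxS := h2.le hxN
    have hxi : ‖e.repr x i‖ = 1 := by
      by_contra hne
      apply hx
      intro j
      refine ⟨(hxS j).1, fun hj => ?_⟩
      rcases Finset.mem_insert.1 hj with rfl | hj
      · exact lt_of_le_of_ne (hxS j).1 hne
      · exact (hxS j).2 hj
    apply h2.not_ge
    intro y hy
    have hx0 : e.repr x i ≠ 0 := by
      intro h; rw [h] at hxi; simp at hxi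
    have hr : ‖e.repr y i / e.repr x i‖ ≤ 1 := by
      rw [norm_div, hxi, div_one]; exact (hy i).1
    set r : ℤ_[p] := ⟨_, hr⟩ with hrdef
    have hz : y - r • x ∈ auxM p e (insert i S) := by
      have hzS : y - r • x ∈ auxM p e S := sub_mem hy (Submodule.smul_mem _ _ hxS)
      have hzi : e.repr (y - r • x) i = 0 := by
        rw [aux_smul, map_sub, map_smul, Finsupp.sub_apply, Finsupp.smul_apply, smul_eq_mul]
        simp only [hrdef]
        field_simp
        simp
      intro j
      refine ⟨(hzS j).1, fun hj => ?_⟩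
      rcases Finset.mem_insert.1 hj with rfl | hj
      · rw [hzi]; simp
      · exact (hzS j).2 hj
    have := add_mem (h1.le hz) (Submodule.smul_mem N r hxN)
    simpa using this

lemma aux_pair {n : ℕ} (e : Module.Basis (Fin n) ℚ_[p] V) (B : LinearMap.BilinForm ℚ_[p] V)
    (he : AuxGood p B e) (x y : V) :
    B x y = ∑ i, e.repr x i * e.repr y i * B (e i) (e i) := by
  conv_lhs => rw [← e.sum_repr x, ← e.sum_repr y]
  simp only [map_sum, LinearMap.sum_apply, map_smul, LinearMap.smul_apply, smul_eq_mul]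
  refine Finset.sum_congr rfl fun i _ => ?_
  rw [Finset.sum_eq_single i]
  · ring
  · intro j _ hji
    rw [he.1 j i hji]; ring
  · simp

lemma aux_norm_sum {ι : Type*} (s : Finset ι) (f : ι → ℚ_[p]) (h : ∀ i ∈ s, ‖f i‖ ≤ 1) :
    ‖∑ i ∈ s, f i‖ ≤ 1 := by
  rw [← aux_mem_one]
  exact Submodule.sum_mem _ fun i hi => (aux_mem_one p _).2 (h i hi)

lemma aux_dual {n : ℕ} (e : Module.Basis (Fin n) ℚ_[p] V) (Q : QuadraticForm ℚ_[p] V)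
    (he : AuxGood p (QuadraticMap.polarBilin Q) e) :
    dualLattice p Q (auxM p e ∅) = auxM p e (auxK p (QuadraticMap.polarBilin Q) e) := by
  set B := QuadraticMap.polarBilin Q with hB
  have hp1 := aux_one_lt p
  have key : ∀ (x : V) (i : Fin n), ‖e.repr x i * B (e i) (e i)‖ ≤ 1 ↔
      (‖e.repr x i‖ ≤ 1 ∧ (i ∈ auxK p B e → ‖e.repr x i‖ < 1)) := by
    intro x i
    rw [norm_mul, aux_mem_K]
    rcases he.2 i with h | h
    · rw [h, mul_one]
      exact ⟨fun h' => ⟨h', fun h'' => absurd h'' hp1.ne⟩, fun h' => h'.1⟩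
    · rw [h, ← aux_lt_one]
      exact ⟨fun h' => ⟨h'.le, fun _ => h'⟩, fun h' => h'.2 rfl⟩
  ext x
  change (∀ y ∈ auxM p e ∅, B x y ∈ (1 : Submodule ℤ_[p] ℚ_[p])) ↔ _
  simp only [aux_mem_one, aux_mem_M p e (auxK p B e)]
  simp only [← key]
  constructor
  · intro h i
    have := h (e i) (aux_basis_mem p e ∅ i (by simp))
    rw [aux_pair p e B he, Finset.sum_eq_single i] at this
    · simpa using this
    · intro j _ hji
      simp [hji.symm]
    · simp
  · intro h y hy
    rw [aux_pair p e B he]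
    apply aux_norm_sum
    intro i _
    rw [mul_right_comm, norm_mul]
    exact mul_le_one₀ (h i) (norm_nonneg _) (hy i).1

lemma aux_even {n : ℕ} (b e : Module.Basis (Fin n) ℚ_[p] V) (B : LinearMap.BilinForm ℚ_[p] V)
    (he : AuxGood p B e)
    (hdet : ∃ u s : ℚ_[p], ‖u‖ = 1 ∧ s ≠ 0 ∧
      (Matrix.of fun i j => B (b i) (b j)).det = u * s ^ 2) :
    Even (auxK p B e).card := by
  obtain ⟨u, s, hu, hs, hd⟩ := hdet
  have hp1 := aux_one_lt p
  have hb : (Matrix.of fun i j => B (b i) (b j)) = LinearMap.BilinForm.toMatrix b B := by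
    ext i j; simp [LinearMap.BilinForm.toMatrix_apply]
  have hE : LinearMap.BilinForm.toMatrix e B = Matrix.diagonal fun i => B (e i) (e i) := by
    ext i j
    rw [LinearMap.BilinForm.toMatrix_apply, Matrix.diagonal_apply]
    split_ifs with h
    · subst h; rfl
    · exact he.1 i j h
  have h1 := congrArg Matrix.det (LinearMap.BilinForm.toMatrix_mul_basis_toMatrix b e B)
  rw [Matrix.det_mul, Matrix.det_mul, Matrix.det_transpose, ← hb, hd, hE,
    Matrix.det_diagonal] at h1
  set d := (b.toMatrix e).det with hdd
  have h2 := congrArg norm h1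
  rw [norm_prod] at h2
  have h3 : ∏ i, ‖B (e i) (e i)‖ = (p : ℝ) ^ (auxK p B e).card := by
    rw [← Finset.prod_const, auxK, Finset.prod_filter]
    refine Finset.prod_congr rfl fun i _ => ?_
    split_ifs with h
    · exact h
    · exact (he.2 i).resolve_right h
  rw [h3] at h2
  have h4 : ‖d * (u * s ^ 2) * d‖ = ‖d * s‖ ^ 2 := by
    simp only [norm_mul, norm_pow, hu]; ring
  rw [h4] at h2
  have hds : d * s ≠ 0 := by
    intro h0
    rw [h0] at h2
    have : (0 : ℝ) < (p : ℝ) ^ (auxK p B e).card := by positivity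
    simp at h2
    linarith
  rw [Padic.norm_eq_zpow_neg_valuation hds, ← zpow_natCast, ← zpow_natCast, ← zpow_mul] at h2
  have h5 := zpow_right_injective₀ (by linarith) hp1.ne' h2
  push_cast at h5
  rw [Nat.even_iff]
  omega

end Lattices

section Existence

lemma aux_exists {n : ℕ} (b : Module.Basis (Fin n) ℚ_[p] V) (B : LinearMap.BilinForm ℚ_[p] V)
    (hB : ∀ x y, B x y = B y x) (hs : LinearMap.SeparatingLeft B) :
    ∃ e : Fin n → V, AuxGood p B e := by
  haveI : FiniteDimensional ℚ_[p] V := Module.Finite.of_basis b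
  haveI : Invertible (2 : ℚ_[p]) := invertibleOfNonzero two_ne_zero
  have hfr : Module.finrank ℚ_[p] V = n := by
    rw [Module.finrank_eq_card_basis b, Fintype.card_fin]
  obtain ⟨v, hv⟩ := LinearMap.BilinForm.exists_orthogonal_basis (B := B) ⟨hB⟩
  subst hfr
  have hne : ∀ i, B (v i) (v i) ≠ 0 := fun i =>
    LinearMap.IsOrthoᵢ.not_isOrtho_basis_self_of_separatingLeft hv hs i
  choose t ht0 ht using fun i => aux_scale p (hne i)
  refine ⟨fun i => t i • v i, ?_, ?_⟩
  · intro i j hij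
    have h0 : B (v i) (v j) = 0 := hv hij
    simp [h0]
  · intro i
    have h1 : B (t i • v i) (t i • v i) = t i ^ 2 * B (v i) (v i) := by
      simp only [map_smul, LinearMap.smul_apply, smul_eq_mul]; ring
    simp only [h1]
    exact ht i

lemma aux_basis_s2 {n : ℕ} (b : Module.Basis (Fin n) ℚ_[p] V) (B : LinearMap.BilinForm ℚ_[p] V)
    (e : Fin n → V) (he : AuxGood p B e) :
    ∃ e' : Module.Basis (Fin n) ℚ_[p] V, (e' : Fin n → V) = e := by
  have hp1 := aux_one_lt p
  have hli : LinearIndependent ℚ_[p] e := by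
    apply LinearMap.linearIndependent_of_isOrthoᵢ (B := B)
    · exact fun i j hij => he.1 i j hij
    · intro i h0
      have := he.2 i
      rw [h0, norm_zero] at this
      rcases this with h | h <;> linarith
  have hfr : Fintype.card (Fin n) = Module.finrank ℚ_[p] V := by
    rw [Module.finrank_eq_card_basis b]
  rcases Nat.eq_zero_or_pos n with h0 | h0
  · subst h0
    exact ⟨b, Subsingleton.elim _ _⟩
  haveI : Nonempty (Fin n) := ⟨⟨0, h0⟩⟩
  exact ⟨basisOfLinearIndependentOfCardEqFinrank hli hfr,
    coe_basisOfLinearIndependentOfCardEqFinrank hli hfr⟩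

end Existence

theorem statement_2 (hp : p ≠ 2) (n : ℕ) (hn : 3 ≤ n)
    (Q : QuadraticForm ℚ_[p] V)
    (hQ : LinearMap.SeparatingLeft (QuadraticMap.polarBilin Q))
    (b : Module.Basis (Fin n) ℚ_[p] V)
    -- unit determinant: the Gram determinant lies in `ℤ_p^× ⬝ (ℚ_p^×)²`
    (hdet : ∃ u s : ℚ_[p], ‖u‖ = 1 ∧ s ≠ 0 ∧
      (Matrix.of fun i j => QuadraticMap.polar Q (b i) (b j)).det = u * s ^ 2)
    (hnosd : ¬ ∃ L : Submodule ℤ_[p] V, IsLattice p L ∧ dualLattice p Q L = L) :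
    ∃ Λ : Submodule ℤ_[p] V, IsLattice p Λ ∧
      (∀ x ∈ Λ, (p : ℤ_[p]) • x ∈ dualLattice p Q Λ) ∧
      dualLattice p Q Λ ≤ Λ ∧
      chainLength p (dualLattice p Q Λ) Λ 2 ∧
      ∀ x ∈ Λ, Q x ∈ (1 : Submodule ℤ_[p] ℚ_[p]) → x ∈ dualLattice p Q Λ := by
  have hp1 := aux_one_lt p
  set B := QuadraticMap.polarBilin Q with hBdef
  have hB : ∀ x y, B x y = B y x := fun x y => QuadraticMap.polar_comm Q x y
  obtain ⟨e₀, he₀, hcard, hmin⟩ := aux_minimal p hp hB (aux_exists p b B hB hQ)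
  obtain ⟨e, rfl⟩ := aux_basis_s2 p b B e₀ he₀
  have heven := aux_even p b e B he₀ hdet
  have hdual := aux_dual p e Q he₀
  rw [← hBdef] at hdual
  have hcard2 : (auxK p B e).card = 2 := by
    have hne : (auxK p B e).card ≠ 0 := by
      intro h0
      apply hnosd
      refine ⟨auxM p e ∅, aux_M_lattice p e, ?_⟩
      rw [hdual, Finset.card_eq_zero.1 h0]
    rw [Nat.even_iff] at heven
    omega
  obtain ⟨i, j, hij, hK⟩ := Finset.card_eq_two.1 hcard2
  have hiK : i ∈ auxK p B e := by rw [hK]; simp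
  have hjK : j ∈ auxK p B e := by rw [hK]; simp
  have hc1 : auxM p e {i, j} ⋖ auxM p e {j} := aux_covBy p e {j} i (by simpa using hij)
  have hc2 : auxM p e {j} ⋖ auxM p e ∅ := aux_covBy p e ∅ j (by simp)
  refine ⟨auxM p e ∅, aux_M_lattice p e, ?_, ?_, ?_, ?_⟩
  · intro x hx
    rw [hdual]
    intro l
    have h1 : ‖e.repr ((p : ℤ_[p]) • x) l‖ < 1 := by
      rw [aux_smul, map_smul, Finsupp.smul_apply, smul_eq_mul, norm_mul]
      refine (mul_le_of_le_one_right (norm_nonneg _) (hx l).1).trans_lt ?_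
      rw [PadicInt.coe_natCast]
      exact Padic.norm_p_lt_one
    exact ⟨h1.le, fun _ => h1⟩
  · rw [hdual, hK]
    exact hc1.le.trans hc2.le
  · rw [hdual, hK]
    refine ⟨![auxM p e {i, j}, auxM p e {j}, auxM p e ∅], rfl, rfl, ?_⟩
    intro l
    fin_cases l
    · exact hc1
    · exact hc2
  · intro x hx hQx
    rw [aux_mem_one] at hQx
    have hBx : ‖B x x‖ ≤ 1 := by
      have h2 : B x x = 2 * Q x := by
        rw [hBdef, QuadraticMap.polarBilin_apply_apply, QuadraticMap.polar_self]
        simp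
      rw [h2, norm_mul, aux_norm_two p hp, one_mul]
      exact hQx
    rw [aux_pair p e B he₀, ← Finset.sum_sdiff (Finset.subset_univ (auxK p B e)), hK,
      Finset.sum_pair hij] at hBx
    set R := ∑ l ∈ Finset.univ \ {i, j}, e.repr x l * e.repr x l * B (e l) (e l) with hR
    have hRn : ‖R‖ ≤ 1 := by
      apply aux_norm_sum
      intro l hl
      rw [← hK, Finset.mem_sdiff, aux_mem_K] at hl
      rw [norm_mul, norm_mul, (he₀.2 l).resolve_right hl.2, mul_one]
      exact mul_le_one₀ (hx l).1 (norm_nonneg _) (hx l).1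
    have hmain : ‖B (e i) (e i) * (e.repr x i) ^ 2 + B (e j) (e j) * (e.repr x j) ^ 2‖ ≤ 1 := by
      rw [← aux_mem_one] at hBx hRn ⊢
      have h := sub_mem hBx hRn
      convert h using 1
      ring
    have hxi := hmin i j hij hiK hjK _ _ (hx i).1 hmain
    have hxj := hmin j i hij.symm hjK hiK _ _ (hx j).1 (by rwa [add_comm] at hmain)
    rw [hdual, hK]
    intro l
    refine ⟨(hx l).1, fun hl => ?_⟩
    rcases Finset.mem_insert.1 hl with rfl | hl
    · exact hxi
    · rw [Finset.mem_singleton.1 hl]; exact hxj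
end

section
/- Let p be an odd prime and (V, Q) a finite-dimensional nondegenerate quadratic space over ℚ_p containing no self-dual lattice. Let Λ be a vertex lattice of type 2, i.e. pΛ ⊆ Λ^∨ ⊆ Λ and dim_{𝔽_p}(Λ/Λ^∨) = 2. Then every x ∈ Λ with Q(x) ∈ ℤ_p lies in Λ^∨; equivalently, the induced 𝔽_p-quadratic form x mod Λ^∨ ↦ p·Q(x) mod p on the 2-dimensional 𝔽_p-vector space Λ/Λ^∨ is anisotropic. -/
/-!
Statement 5: Let `p` be an odd prime and `(V, Q)` a finite-dimensional nondegenerate quadratic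
space over `ℚ_p` containing no self-dual lattice.  Let `Λ` be a vertex lattice of type 2.  Then
every `x ∈ Λ` with `Q x ∈ ℤ_p` lies in `Λ^∨` (i.e. the induced quadratic form on `Λ/Λ^∨` is
anisotropic).
-/

open QuadraticMap

variable (p : ℕ) [Fact p.Prime]
variable {V : Type*} [AddCommGroup V] [Module ℚ_[p] V] [Module ℤ_[p] V]
  [IsScalarTower ℤ_[p] ℚ_[p] V]

theorem aux_chain {α : Type*} [Lattice α] [IsModularLattice α] {D M T A B : α}
    (h1 : D ⋖ M) (h2 : M ⋖ T) (hDA : D < A) (hAB : A < B) (hBT : B < T) : False := by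
  have key : ∀ X, D < X → X < T → X ≠ M → X ⊓ M = D ∧ X ⊔ M = T := by
    intro X hDX hXT hne
    constructor
    · rcases h1.eq_or_eq (le_inf hDX.le h1.le) inf_le_right with h | h
      · exact h
      · rcases h2.eq_or_eq (inf_eq_right.mp h) hXT.le with h' | h'
        · exact absurd h' hne
        · exact absurd h' hXT.ne
    · rcases h2.eq_or_eq (le_sup_right : M ≤ X ⊔ M) (sup_le hXT.le h2.le) with h | h
      · rcases h1.eq_or_eq hDX.le (sup_eq_right.mp h) with h' | h'
        · exact absurd h' hDX.ne'
        · exact absurd h' hne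
      · exact h
  have hA : A ≠ M := by
    rintro rfl
    exact h2.2 hAB hBT
  have hB : B ≠ M := by
    rintro rfl
    exact h1.2 hDA hAB
  obtain ⟨a1, a2⟩ := key A hDA (hAB.trans hBT) hA
  obtain ⟨b1, b2⟩ := key B (hDA.trans hAB) hBT hB
  exact hAB.ne (eq_of_le_of_inf_le_of_sup_le hAB.le (b1.trans a1.symm).le (b2.trans a2.symm).le)

theorem aux_dd [FiniteDimensional ℚ_[p] V]
    (Q : QuadraticForm ℚ_[p] V)
    (hQ : LinearMap.BilinForm.Nondegenerate (QuadraticMap.polarBilin Q))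
    (Λ : Submodule ℤ_[p] V) (hΛ : IsLattice p Λ) :
    dualLattice p Q (dualLattice p Q Λ) = Λ := by
  haveI : Submodule.IsLattice ℚ_[p] Λ := ⟨hΛ.1, hΛ.2⟩
  haveI : Module.Free ℤ_[p] Λ := Submodule.IsLattice.free ℚ_[p] Λ
  let b := Module.Free.chooseBasis ℤ_[p] Λ
  have hs : Submodule.span ℤ_[p] (Set.range (b.extendOfIsLattice ℚ_[p])) = Λ := by
    have : Set.range (b.extendOfIsLattice ℚ_[p]) = Λ.subtype '' Set.range b := by
      rw [← Set.range_comp]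
      congr 1
      ext k
      simp
    rw [this, Submodule.span_image, b.span_eq, Submodule.map_top, Submodule.range_subtype]
  have := LinearMap.BilinForm.dualSubmodule_dualSubmodule_of_basis (R := ℤ_[p])
    (QuadraticMap.polarBilin Q) hQ
    ⟨fun x y => by simpa using QuadraticMap.polar_comm Q x y⟩ (b.extendOfIsLattice ℚ_[p])
  rw [hs] at this
  exact this

theorem statement_5 (hp : p ≠ 2) [FiniteDimensional ℚ_[p] V]
    (Q : QuadraticForm ℚ_[p] V)
    (hQ : LinearMap.BilinForm.Nondegenerate (QuadraticMap.polarBilin Q))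
    (hnosd : ¬ ∃ L : Submodule ℤ_[p] V, IsLattice p L ∧ dualLattice p Q L = L)
    (Λ : Submodule ℤ_[p] V) (hΛ : IsLattice p Λ)
    (hvertex : ∀ x ∈ Λ, (p : ℤ_[p]) • x ∈ dualLattice p Q Λ)
    (hvertex' : dualLattice p Q Λ ≤ Λ)
    (htype : chainLength p (dualLattice p Q Λ) Λ 2) :
    ∀ x ∈ Λ, Q x ∈ (1 : Submodule ℤ_[p] ℚ_[p]) → x ∈ dualLattice p Q Λ := by
  intro x hx hQx
  by_contra hxD
  obtain ⟨f, hf0, hf2, hf⟩ := htype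
  have c1 : dualLattice p Q Λ ⋖ f 1 := by
    have := hf 0
    rw [← hf0]; exact this
  have c2 : f 1 ⋖ Λ := by
    have := hf 1
    rw [← hf2]; exact this
  have hmem : ∀ (N : Submodule ℤ_[p] V) (z : V), z ∈ dualLattice p Q N ↔
      ∀ y ∈ N, QuadraticMap.polarBilin Q z y ∈ (1 : Submodule ℤ_[p] ℚ_[p]) := fun _ _ => Iff.rfl
  have hsymm : ∀ a b, QuadraticMap.polarBilin Q a b = QuadraticMap.polarBilin Q b a :=
    fun a b => by simpa using QuadraticMap.polar_comm Q a b
  have hanti : ∀ N N' : Submodule ℤ_[p] V, N ≤ N' → dualLattice p Q N' ≤ dualLattice p Q N :=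
    fun N N' h z hz y hy => hz y (h hy)
  have hle : ∀ N N' : Submodule ℤ_[p] V, N ≤ dualLattice p Q N' → N' ≤ dualLattice p Q N :=
    fun N N' h z hz y hy => by
      rw [hsymm]; exact h hy z hz
  set D := dualLattice p Q Λ with hD
  set L : Submodule ℤ_[p] V := D ⊔ Submodule.span ℤ_[p] {x} with hL
  have hxL : x ∈ L := Submodule.mem_sup_right (Submodule.mem_span_singleton_self x)
  have hDL : D < L := lt_of_le_of_ne le_sup_left (fun h => hxD (h ▸ hxL))
  have hLΛ : L ≤ Λ := sup_le hvertex' (by simpa using hx)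
  have hLL : L ≤ dualLattice p Q L := by
    refine sup_le (hanti _ _ hLΛ) ?_
    rw [Submodule.span_singleton_le_iff_mem]
    have : L ≤ dualLattice p Q (Submodule.span ℤ_[p] {x}) := by
      refine sup_le (hanti _ _ (by simpa using hx)) ?_
      rw [Submodule.span_singleton_le_iff_mem]
      apply hle (Submodule.span ℤ_[p] {x}) _ _ (Submodule.mem_span_singleton_self x)
      rw [Submodule.span_singleton_le_iff_mem]
      intro y hy
      obtain ⟨a, rfl⟩ := Submodule.mem_span_singleton.mp hy
      have h2 : QuadraticMap.polarBilin Q x (a • x) = a • (Q x + Q x) := by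
        rw [← IsScalarTower.algebraMap_smul ℚ_[p] a x, map_smul]
        simp [two_mul, Algebra.smul_def, QuadraticMap.polar_self]
      rw [h2]
      exact Submodule.smul_mem _ _ (add_mem hQx hQx)
    exact hle _ _ this (Submodule.mem_span_singleton_self x)
  have hLd : dualLattice p Q L ≤ Λ := by
    rw [← aux_dd p Q hQ Λ hΛ]
    exact hanti _ _ hDL.le
  have hLlat : IsLattice p L := by
    constructor
    · have : IsNoetherian ℤ_[p] Λ := isNoetherian_of_fg_of_noetherian _ hΛ.1
      have := isNoetherian_of_le hLΛ
      exact (Module.Finite.iff_fg).mp inferInstance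
    · rw [eq_top_iff, ← hΛ.2, Submodule.span_le]
      intro y hy
      have hpy := Submodule.subset_span (R := ℚ_[p]) (s := (L : Set V)) (hDL.le (hvertex y hy))
      have hp0 : (p : ℚ_[p]) ≠ 0 := by
        exact_mod_cast (Fact.out : p.Prime).ne_zero
      have := Submodule.smul_mem _ ((p : ℚ_[p])⁻¹) hpy
      rw [← IsScalarTower.algebraMap_smul ℚ_[p] (p : ℤ_[p]) y, smul_smul, map_natCast,
        inv_mul_cancel₀ hp0, one_smul] at this
      exact this
  have hne : L ≠ dualLattice p Q L := fun h => hnosd ⟨L, hLlat, h.symm⟩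
  have hne2 : dualLattice p Q L ≠ Λ := fun h => hxD (hle _ _ h.ge hxL)
  exact aux_chain c1 c2 hDL (lt_of_le_of_ne hLL hne) (lt_of_le_of_ne hLd hne2)
end

section
/- Let p be an odd prime and (V, Q) a finite-dimensional nondegenerate quadratic space over ℚ_p. Let Λ ⊆ V be a vertex lattice of type 2 (pΛ ⊆ Λ^∨ ⊆ Λ, dim_{𝔽_p}(Λ/Λ^∨) = 2) such that every x ∈ Λ with Q(x) ∈ ℤ_p lies in Λ^∨. Let 𝔽 be an algebraically closed field of characteristic p, W₀ = W(𝔽), K₀ = Frac(W₀), σ the automorphism of K₀ induced by the Witt vector Frobenius, and let Φ = id_V ⊗ σ be the induced σ-semilinear bijection of V ⊗_{ℚ_p} K₀. Then there are exactly two self-dual W₀-lattices L with Λ^∨ ⊗_{ℤ_p} W₀ ⊆ L ⊆ Λ ⊗_{ℤ_p} W₀; the map Φ_* (W₀-span of the image under Φ) interchanges these two lattices, so that in particular Φ_*(L) ≠ L and Φ_*(Φ_*(L)) = L for each of them. -/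
/-!
Statement 12: Let `p` be an odd prime and `(V, Q)` a finite-dimensional nondegenerate quadratic
space over `ℚ_p`.  Let `Λ ⊆ V` be a vertex lattice of type 2 such that every `x ∈ Λ` with
`Q x ∈ ℤ_p` lies in `Λ^∨`.  Let `𝔽` be an algebraically closed field of characteristic `p`,
`W₀ = W(𝔽)`, `K₀ = Frac W₀`, `σ` the automorphism of `K₀` induced by the Witt vector
Frobenius, and `Φ = id_V ⊗ σ` on `V ⊗_{ℚ_p} K₀`.  Then there are exactly two self-dual
`W₀`-lattices `L` with `Λ^∨ ⊗ W₀ ⊆ L ⊆ Λ ⊗ W₀`, and `Φ_*` interchanges them (so in particular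
`Φ_* L ≠ L` and `Φ_* (Φ_* L) = L` for each of them).
-/

open QuadraticMap

variable (p : ℕ) [Fact p.Prime]
variable {V : Type*} [AddCommGroup V] [Module ℚ_[p] V] [Module ℤ_[p] V]
  [IsScalarTower ℤ_[p] ℚ_[p] V]

/-- `L` is a `ℤ_p`-lattice in the `ℚ_p`-vector space `V`. -/
def IsZpLattice (L : Submodule ℤ_[p] V) : Prop :=
  L.FG ∧ Submodule.span ℚ_[p] (L : Set V) = ⊤

/-- The dual lattice `L^∨` with respect to the bilinear form associated to `Q`. -/
noncomputable def zpDual (Q : QuadraticForm ℚ_[p] V) (L : Submodule ℤ_[p] V) :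
    Submodule ℤ_[p] V :=
  LinearMap.BilinForm.dualSubmodule (QuadraticMap.polarBilin Q) L

/-- A saturated chain of `ℤ_p`-submodules of length `k` from `A` to `B`; for `A ≤ B` killed by
`p` this says `dim_{𝔽_p} (B/A) = k`. -/
def zpChainLength (A B : Submodule ℤ_[p] V) (k : ℕ) : Prop :=
  ∃ f : Fin (k + 1) → Submodule ℤ_[p] V,
    f 0 = A ∧ f (Fin.last k) = B ∧ ∀ i : Fin k, f i.castSucc ⋖ f i.succ

namespace S12

section Abstract

variable {W K T : Type*} [CommRing W] [Field K] [Algebra W K]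
  [AddCommGroup T] [Module W T] [Module K T] [IsScalarTower W K T]

/-- Working data for the abstract argument. -/
structure Setup (B : LinearMap.BilinForm K T) (D M : Submodule W T) (π α β : W) (E F : T) :
    Prop where
  inj : Function.Injective (algebraMap W K)
  symm : ∀ x y, B x y = B y x
  prime : Prime π
  loc : ∀ w : W, π ∣ w ∨ IsUnit w
  two : IsUnit (2 : W)
  dualD : B.dualSubmodule D = M
  dualM : B.dualSubmodule M = D
  DM : D ≤ M
  EM : E ∈ M
  FM : F ∈ M
  decomp : ∀ x ∈ M, ∃ d ∈ D, ∃ s t : W, x = d + s • E + t • F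
  πE : π • E ∈ D
  πF : π • F ∈ D
  EF : B E F = 0
  EE : algebraMap W K π * B E E = algebraMap W K α
  FF : algebraMap W K π * B F F = algebraMap W K β
  uα : IsUnit α
  uβ : IsUnit β

/-- The lattice attached to `u`. -/
def Lat (D : Submodule W T) (E F : T) (u : W) : Submodule W T :=
  D ⊔ Submodule.span W {u • E + F}

variable {B : LinearMap.BilinForm K T} {D M : Submodule W T} {π α β : W} {E F : T}

theorem mem_Lat {u : W} {x : T} :
    x ∈ Lat D E F u ↔ ∃ d ∈ D, ∃ t : W, x = d + t • (u • E + F) := by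
  unfold Lat
  rw [Submodule.mem_sup]
  constructor
  · rintro ⟨d, hd, z, hz, rfl⟩
    obtain ⟨t, rfl⟩ := Submodule.mem_span_singleton.1 hz
    exact ⟨d, hd, t, rfl⟩
  · rintro ⟨d, hd, t, rfl⟩
    exact ⟨d, hd, _, Submodule.smul_mem _ _ (Submodule.mem_span_singleton_self _), rfl⟩

theorem Setup.B_smul_left (w : W) (x y : T) : B (w • x) y = algebraMap W K w * B x y := by
  rw [← algebraMap_smul K w x]; simp [Algebra.smul_def]

theorem Setup.B_smul_right (w : W) (x y : T) : B x (w • y) = algebraMap W K w * B x y := by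
  rw [← algebraMap_smul K w y]; simp [Algebra.smul_def]

variable (h : Setup B D M π α β E F)
include h

theorem Setup.BDM {d m : T} (hd : d ∈ D) (hm : m ∈ M) : B d m ∈ (1 : Submodule W K) := by
  rw [← h.dualM] at hd
  exact hd m hm

theorem Setup.BMD {d m : T} (hd : d ∈ D) (hm : m ∈ M) : B m d ∈ (1 : Submodule W K) := by
  rw [h.symm]; exact h.BDM hd hm

theorem Setup.mem_iff {k : K} {c : W} (hk : algebraMap W K π * k = algebraMap W K c) :
    k ∈ (1 : Submodule W K) ↔ π ∣ c := by
  have hπ : algebraMap W K π ≠ 0 := by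
    rw [Ne, map_eq_zero_iff _ h.inj]; exact h.prime.ne_zero
  rw [Submodule.mem_one]
  constructor
  · rintro ⟨y, rfl⟩
    exact ⟨y, h.inj (by rw [← hk, map_mul])⟩
  · rintro ⟨y, rfl⟩
    refine ⟨y, mul_left_cancel₀ hπ ?_⟩
    rw [hk, map_mul]

theorem Setup.pair (s t s' t' : W) :
    algebraMap W K π * B (s • E + t • F) (s' • E + t' • F)
      = algebraMap W K (α * s * s' + β * t * t') := by
  have hFE : B F E = 0 := by rw [h.symm, h.EF]
  simp only [map_add, LinearMap.add_apply, Setup.B_smul_left, Setup.B_smul_right, map_mul,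
    h.EF, hFE, ← h.EE, ← h.FF]
  ring

theorem Setup.pair_mem (s t s' t' : W) :
    B (s • E + t • F) (s' • E + t' • F) ∈ (1 : Submodule W K) ↔ π ∣ α * s * s' + β * t * t' :=
  h.mem_iff (h.pair s t s' t')

theorem Setup.vM (s t : W) : s • E + t • F ∈ M :=
  M.add_mem (M.smul_mem _ h.EM) (M.smul_mem _ h.FM)

theorem Setup.D_le (u : W) : D ≤ Lat D E F u := le_sup_left

theorem Setup.le_M (u : W) : Lat D E F u ≤ M := by
  refine sup_le h.DM ?_
  rw [Submodule.span_singleton_le_iff_mem]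
  simpa using h.vM u 1

theorem Setup.f_mem (u : W) : u • E + F ∈ Lat D E F u :=
  mem_Lat.2 ⟨0, D.zero_mem, 1, by simp⟩

theorem Setup.smulE {w : W} (hw : π ∣ w) : w • E ∈ D := by
  obtain ⟨y, rfl⟩ := hw
  rw [mul_comm, mul_smul]; exact D.smul_mem _ h.πE

theorem Setup.smulF {w : W} (hw : π ∣ w) : w • F ∈ D := by
  obtain ⟨y, rfl⟩ := hw
  rw [mul_comm, mul_smul]; exact D.smul_mem _ h.πF

theorem Setup.not_unit {x : W} (hx : IsUnit x) : ¬ π ∣ x := fun hd =>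
  h.prime.not_isUnit (isUnit_of_dvd_unit hd hx)

theorem Setup.u_ndvd {u : W} (hu : π ∣ α * u ^ 2 + β) : ¬ π ∣ u := by
  intro hd
  refine h.not_unit h.uβ ?_
  have h1 : π ∣ α * u ^ 2 := Dvd.dvd.mul_left (dvd_pow hd two_ne_zero) _
  exact (dvd_add_right h1).1 hu

theorem Setup.dvd_unit_mul {a x : W} (ha : ¬ π ∣ a) (hd : π ∣ a * x) : π ∣ x :=
  (h.prime.dvd_or_dvd hd).resolve_left ha

theorem Setup.selfdual {u : W} (hu : π ∣ α * u ^ 2 + β) :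
    B.dualSubmodule (Lat D E F u) = Lat D E F u := by
  apply le_antisymm
  · intro x hx
    have hxM : x ∈ M := by
      rw [← h.dualD]
      exact fun y hy => hx y (h.D_le u hy)
    obtain ⟨d, hd, s, t, rfl⟩ := h.decomp x hxM
    have h1 := hx _ (h.f_mem u)
    have h2 : B (s • E + t • F) (u • E + (1 : W) • F) ∈ (1 : Submodule W K) := by
      have h3 := h.BDM hd (h.vM u 1)
      have h4 := Submodule.sub_mem _ h1 h3
      convert h4 using 1
      simp only [map_add, LinearMap.add_apply, one_smul]
      ring
    rw [h.pair_mem] at h2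
    have h5 : π ∣ (α * u) * (s - t * u) := by
      have : (α * u) * (s - t * u) = (α * s * u + β * t * 1) - t * (α * u ^ 2 + β) := by ring
      rw [this]
      exact dvd_sub h2 (hu.mul_left _)
    have h6 : π ∣ s - t * u := by
      refine h.dvd_unit_mul ?_ h5
      intro hc
      rcases h.prime.dvd_or_dvd hc with hc | hc
      · exact h.not_unit h.uα hc
      · exact h.u_ndvd hu hc
    refine mem_Lat.2 ⟨d + (s - t * u) • E, D.add_mem hd (h.smulE h6), t, ?_⟩
    module
  · intro x hx y hy
    obtain ⟨d, hd, t, rfl⟩ := mem_Lat.1 hx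
    obtain ⟨d', hd', t', rfl⟩ := mem_Lat.1 hy
    have hyM := h.le_M u hy
    have e : B (d + t • (u • E + F)) (d' + t' • (u • E + F)) =
        B d (d' + t' • (u • E + F)) + (B (t • (u • E + F)) d' +
          B ((t * u) • E + t • F) ((t' * u) • E + t' • F)) := by
      rw [mul_smul, mul_smul, ← smul_add, ← smul_add]
      simp only [map_add, LinearMap.add_apply]
      ring
    rw [e]
    refine Submodule.add_mem _ (h.BDM hd hyM) (Submodule.add_mem _ (h.BMD hd' ?_) ?_)
    · apply M.smul_mem
      exact h.le_M u (h.f_mem u)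
    · rw [h.pair_mem]
      have : α * (t * u) * (t' * u) + β * t * t' = (t * t') * (α * u ^ 2 + β) := by ring
      rw [this]
      exact hu.mul_left _

theorem Setup.congr {u v : W} (huv : π ∣ u - v) : Lat D E F u = Lat D E F v := by
  have key : ∀ u v : W, π ∣ u - v → Lat D E F u ≤ Lat D E F v := by
    intro u v huv
    refine sup_le (h.D_le v) ?_
    rw [Submodule.span_singleton_le_iff_mem]
    refine mem_Lat.2 ⟨(u - v) • E, h.smulE huv, 1, ?_⟩
    module
  exact le_antisymm (key u v huv) (key v u (by rwa [dvd_sub_comm]))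

theorem Setup.ne {u : W} (hu : π ∣ α * u ^ 2 + β) : Lat D E F u ≠ Lat D E F (-u) := by
  intro he
  have h1 := h.f_mem u
  have h2 := h.f_mem (-u)
  rw [← he] at h2
  have h3 := Submodule.sub_mem _ h1 h2
  rw [← h.selfdual hu] at h3
  have h4 := h3 _ h1
  have h5 : B ((2 * u) • E + (0 : W) • F) (u • E + (1 : W) • F) ∈ (1 : Submodule W K) := by
    convert h4 using 2
    · congr 1; module
    · module
  rw [h.pair_mem] at h5
  have h6 : π ∣ 2 * (α * (u * u)) := by
    convert h5 using 1; ring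
  have h7 := h.dvd_unit_mul (h.not_unit h.uα) (h.dvd_unit_mul (h.not_unit h.two) h6)
  rcases h.prime.dvd_or_dvd h7 with hc | hc <;> exact h.u_ndvd hu hc

theorem Setup.root {u s t : W} (hu : π ∣ α * u ^ 2 + β) (hs : π ∣ α * s ^ 2 + β * t ^ 2) :
    π ∣ s - t * u ∨ π ∣ s + t * u := by
  have h1 : π ∣ α * ((s - t * u) * (s + t * u)) := by
    have : α * ((s - t * u) * (s + t * u)) =
      (α * s ^ 2 + β * t ^ 2) - t ^ 2 * (α * u ^ 2 + β) := by ring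
    rw [this]
    exact dvd_sub hs (hu.mul_left _)
  exact h.prime.dvd_or_dvd (h.dvd_unit_mul (h.not_unit h.uα) h1)

theorem Setup.eq_of {u s t : W} (hu : π ∣ α * u ^ 2 + β) {L : Submodule W T}
    (hL : B.dualSubmodule L = L) (hDL : D ≤ L) (hx : s • E + t • F ∈ L)
    (hx' : s • E + t • F ∉ D) (hst : π ∣ s - t * u) : L = Lat D E F u := by
  have ht : IsUnit t := by
    refine (h.loc t).resolve_left fun hd => hx' (D.add_mem (h.smulE ?_) (h.smulF hd))
    have := dvd_add hst (hd.mul_right u)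
    simpa using this
  have h1 : t • (u • E + F) ∈ L := by
    have := L.sub_mem hx (hDL (h.smulE hst))
    convert this using 1
    module
  have h2 : u • E + F ∈ L := by
    obtain ⟨t', rfl⟩ := ht
    have := L.smul_mem (↑t'⁻¹ : W) h1
    rwa [smul_smul, Units.inv_mul, one_smul] at this
  have h3 : Lat D E F u ≤ L :=
    sup_le hDL ((Submodule.span_singleton_le_iff_mem _ _).2 h2)
  refine le_antisymm ?_ h3
  rw [← hL, ← h.selfdual hu]
  intro x hx y hy
  exact hx y (h3 hy)

theorem Setup.classify {u : W} (hu : π ∣ α * u ^ 2 + β) (L : Submodule W T) :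
    (B.dualSubmodule L = L ∧ D ≤ L ∧ L ≤ M) ↔ (L = Lat D E F u ∨ L = Lat D E F (-u)) := by
  have hu' : π ∣ α * (-u) ^ 2 + β := by simpa using hu
  constructor
  · rintro ⟨hL, hDL, hLM⟩
    have hne : ¬ L ≤ D := by
      intro hLD
      have : L = D := le_antisymm hLD hDL
      subst this
      have hE : E ∈ L := by rw [← hL, h.dualD]; exact h.EM
      have := h.BDM hE h.EM
      rw [h.mem_iff h.EE] at this
      exact h.not_unit h.uα this
    obtain ⟨x, hxL, hxD⟩ := SetLike.not_le_iff_exists.1 hne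
    obtain ⟨d, hd, s, t, rfl⟩ := h.decomp x (hLM hxL)
    rw [add_assoc] at hxL hxD
    have h1 : s • E + t • F ∈ L := by
      have := L.sub_mem hxL (hDL hd)
      rwa [add_sub_cancel_left] at this
    have h2 : s • E + t • F ∉ D := fun hc => hxD (D.add_mem hd hc)
    have h3 : B (s • E + t • F) (s • E + t • F) ∈ (1 : Submodule W K) := by
      have h1' := h1
      rw [← hL] at h1'
      exact h1' _ h1
    rw [h.pair_mem] at h3
    rcases h.root hu (s := s) (t := t) (by convert h3 using 1; ring) with hc | hc
    · exact Or.inl (h.eq_of hu hL hDL h1 h2 hc)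
    · exact Or.inr (h.eq_of hu' hL hDL h1 h2 (by simpa using hc))
  · rintro (rfl | rfl)
    · exact ⟨h.selfdual hu, h.D_le _, h.le_M _⟩
    · exact ⟨h.selfdual hu', h.D_le _, h.le_M _⟩

end Abstract

theorem span_image_span {W T : Type*} [CommRing W] [AddCommGroup T] [Module W T]
    (σ : W →+* W) (Φ : T →+ T) (hΦ : ∀ w x, Φ (w • x) = σ w • Φ x) (S : Set T) :
    Submodule.span W (Φ '' (Submodule.span W S : Set T)) = Submodule.span W (Φ '' S) := by
  apply le_antisymm
  · rw [Submodule.span_le]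
    rintro _ ⟨x, hx, rfl⟩
    induction hx using Submodule.span_induction with
    | mem x hx => exact Submodule.subset_span ⟨x, hx, rfl⟩
    | zero => simp
    | add x y _ _ hx hy => rw [map_add]; exact Submodule.add_mem _ hx hy
    | smul w x _ hx => rw [hΦ]; exact Submodule.smul_mem _ _ hx
  · exact Submodule.span_mono (Set.image_mono Submodule.subset_span)

theorem phi_Lat {W T : Type*} [CommRing W] [AddCommGroup T] [Module W T]
    (σ : W →+* W) (Φ : T →+ T) (hΦ : ∀ w x, Φ (w • x) = σ w • Φ x) (S : Set T)
    (hS : ∀ x ∈ S, Φ x = x) (E F : T) (hE : Φ E = E) (hF : Φ F = F) (u : W) :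
    Submodule.span W (Φ '' (Lat (Submodule.span W S) E F u : Set T)) =
      Lat (Submodule.span W S) E F (σ u) := by
  unfold Lat
  rw [← Submodule.span_union, span_image_span σ Φ hΦ, Set.image_union, Set.image_singleton,
    map_add, hΦ, hE, hF, Set.image_congr (g := id) (by simpa using hS), Set.image_id,
    Submodule.span_union]

end S12

namespace S12

theorem dual_of_dual_bases {W K T ι : Type*} [CommRing W] [Field K] [Algebra W K]
    [AddCommGroup T] [Module W T] [Module K T] [IsScalarTower W K T] [Fintype ι] [DecidableEq ι]
    (B : LinearMap.BilinForm K T) (c c' : Module.Basis ι K T)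
    (hcc : ∀ i j, B (c i) (c' j) = if i = j then 1 else 0) :
    B.dualSubmodule (Submodule.span W (Set.range c')) = Submodule.span W (Set.range c) := by
  apply le_antisymm
  · intro x hx
    have hB : ∀ j, B x (c' j) = c.repr x j := by
      intro j
      have e : B x (c' j) = B (∑ i, c.repr x i • c i) (c' j) := by rw [c.sum_repr]
      rw [e, map_sum, LinearMap.sum_apply]
      simp only [map_smul, LinearMap.smul_apply, hcc, smul_eq_mul]
      simp
    have hw : ∀ j, ∃ w : W, algebraMap W K w = c.repr x j := by
      intro j
      rw [← hB]
      exact Submodule.mem_one.1 (hx _ (Submodule.subset_span ⟨j, rfl⟩))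
    choose w hw using hw
    rw [← c.sum_repr x]
    refine Submodule.sum_mem _ fun i _ => ?_
    rw [← hw, algebraMap_smul]
    exact Submodule.smul_mem _ _ (Submodule.subset_span ⟨i, rfl⟩)
  · rw [Submodule.span_le]
    rintro _ ⟨i, rfl⟩ y hy
    induction hy using Submodule.span_induction with
    | mem y hy =>
      obtain ⟨j, rfl⟩ := hy
      rw [hcc, Submodule.mem_one]
      split_ifs
      · exact ⟨1, map_one _⟩
      · exact ⟨0, map_zero _⟩
    | zero => simp
    | add x y _ _ hx hy => rw [map_add]; exact Submodule.add_mem _ hx hy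
    | smul w x _ hx =>
      rw [← algebraMap_smul K w x, map_smul, algebraMap_smul]
      exact Submodule.smul_mem _ _ hx

section Zp

variable {p : ℕ} [Fact p.Prime]
variable {V : Type*} [AddCommGroup V] [Module ℚ_[p] V] [Module ℤ_[p] V]
  [IsScalarTower ℤ_[p] ℚ_[p] V]

theorem exists_dual_bases (Q : QuadraticForm ℚ_[p] V) [FiniteDimensional ℚ_[p] V]
    (hQ : LinearMap.SeparatingLeft (QuadraticMap.polarBilin Q))
    (Λ : Submodule ℤ_[p] V) (hΛ : IsZpLattice p Λ) :
    ∃ (n : ℕ) (b b' : Module.Basis (Fin n) ℚ_[p] V),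
      Λ = Submodule.span ℤ_[p] (Set.range b) ∧
      zpDual p Q Λ = Submodule.span ℤ_[p] (Set.range b') ∧
      ∀ i j, polar Q (b i) (b' j) = if i = j then 1 else 0 := by
  have : Submodule.IsLattice ℚ_[p] Λ := ⟨hΛ.1, hΛ.2⟩
  have hB : (QuadraticMap.polarBilin Q).Nondegenerate := by
    refine ⟨hQ, fun y hy => hQ y fun x => ?_⟩
    have := hy x
    simpa [polar_comm] using this
  have : Module.Finite ℤ_[p] Λ := Module.Finite.iff_fg.2 hΛ.1
  have : Module.Free ℤ_[p] Λ := Submodule.IsLattice.free ℚ_[p] Λ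
  let b0 := Module.finBasis ℤ_[p] Λ
  let b := b0.extendOfIsLattice ℚ_[p]
  have hb : Λ = Submodule.span ℤ_[p] (Set.range b) := by
    have h1 : Set.range b = Λ.subtype '' Set.range b0 := by
      rw [← Set.range_comp]; congr 1; ext i; simp [b]
    rw [h1, Submodule.span_image, b0.span_eq, Submodule.map_top, Submodule.range_subtype]
  refine ⟨_, b, LinearMap.BilinForm.dualBasis (QuadraticMap.polarBilin Q) hB b, hb, ?_, ?_⟩
  · unfold zpDual
    conv_lhs => rw [hb]
    exact LinearMap.BilinForm.dualSubmodule_span_of_basis _ hB b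
  · intro i j
    have := LinearMap.BilinForm.apply_dualBasis_left (B := QuadraticMap.polarBilin Q) hB b j i
    rw [polar_comm]
    simpa using this

theorem isUnit_of_not_dvd {a : ℤ_[p]} (h : ¬ (p : ℤ_[p]) ∣ a) : IsUnit a := by
  rw [PadicInt.isUnit_iff]
  rw [← PadicInt.norm_lt_one_iff_dvd] at h
  exact le_antisymm (PadicInt.norm_le_one a) (not_lt.1 h)

theorem isUnit_two (hp : p ≠ 2) : IsUnit (2 : ℤ_[p]) := by
  apply isUnit_of_not_dvd
  intro h
  have := (PadicInt.norm_int_lt_one_iff_dvd (p := p) 2).1 (by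
    rw [PadicInt.norm_lt_one_iff_dvd]; exact_mod_cast h)
  have h2 : p ∣ 2 := by exact_mod_cast this
  exact hp ((Nat.prime_dvd_prime_iff_eq Fact.out Nat.prime_two).1 h2)

theorem mem_one_of_dvd {a : ℤ_[p]} {k : ℚ_[p]} (hk : (p : ℚ_[p]) * k = (a : ℚ_[p]))
    (h : (p : ℤ_[p]) ∣ a) : k ∈ (1 : Submodule ℤ_[p] ℚ_[p]) := by
  obtain ⟨c, rfl⟩ := h
  refine Submodule.mem_one.2 ⟨c, ?_⟩
  have hp0 : (p : ℚ_[p]) ≠ 0 := by exact_mod_cast (Fact.out : p.Prime).ne_zero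
  apply mul_left_cancel₀ hp0
  rw [hk]; simp

theorem dvd_of_mem_one {a : ℤ_[p]} {k : ℚ_[p]} (hk : (p : ℚ_[p]) * k = (a : ℚ_[p]))
    (h : k ∈ (1 : Submodule ℤ_[p] ℚ_[p])) : (p : ℤ_[p]) ∣ a := by
  obtain ⟨c, rfl⟩ := Submodule.mem_one.1 h
  refine ⟨c, ?_⟩
  apply Subtype.coe_injective
  change (a : ℚ_[p]) = _
  rw [← hk]; simp

theorem zsmul_eq (c : ℤ_[p]) (x : V) : c • x = (c : ℚ_[p]) • x := by
  rw [← algebraMap_smul ℚ_[p] c x]; rfl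

theorem polar_zsmul_left (Q : QuadraticForm ℚ_[p] V) (c : ℤ_[p]) (x y : V) :
    polar Q (c • x) y = c * polar Q x y := by
  rw [zsmul_eq, polar_smul_left]; rfl

theorem polar_zsmul_right (Q : QuadraticForm ℚ_[p] V) (c : ℤ_[p]) (x y : V) :
    polar Q x (c • y) = c * polar Q x y := by
  rw [zsmul_eq, polar_smul_right]; rfl

theorem mem_one_of_two (hp : p ≠ 2) {k : ℚ_[p]} (h : 2 * k ∈ (1 : Submodule ℤ_[p] ℚ_[p])) :
    k ∈ (1 : Submodule ℤ_[p] ℚ_[p]) := by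
  obtain ⟨c, hc⟩ := Submodule.mem_one.1 h
  obtain ⟨v, hv⟩ := (isUnit_two hp).exists_left_inv
  refine Submodule.mem_one.2 ⟨v * c, ?_⟩
  rw [map_mul, hc, ← mul_assoc]
  have : algebraMap ℤ_[p] ℚ_[p] v * 2 = 1 := by
    rw [← map_ofNat (algebraMap ℤ_[p] ℚ_[p]) 2, ← map_mul, hv, map_one]
  rw [this, one_mul]

theorem covBy_decomp {A C : Submodule ℤ_[p] V} (h : A ⋖ C) {e : V} (he : e ∈ C) (he' : e ∉ A)
    {x : V} (hx : x ∈ C) : ∃ d ∈ A, ∃ s : ℤ_[p], x = d + s • e := by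
  have h1 : A < A ⊔ Submodule.span ℤ_[p] {e} := by
    refine lt_of_le_of_ne le_sup_left fun hh => he' ?_
    rw [hh]
    exact Submodule.mem_sup_right (Submodule.mem_span_singleton_self _)
  have h2 : A ⊔ Submodule.span ℤ_[p] {e} ≤ C :=
    sup_le h.le ((Submodule.span_singleton_le_iff_mem _ _).2 he)
  have h3 : A ⊔ Submodule.span ℤ_[p] {e} = C := by
    by_contra hne
    exact h.2 h1 (lt_of_le_of_ne h2 hne)
  rw [← h3, Submodule.mem_sup] at hx
  obtain ⟨d, hd, z, hz, rfl⟩ := hx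
  obtain ⟨s, rfl⟩ := Submodule.mem_span_singleton.1 hz
  exact ⟨d, hd, s, rfl⟩

theorem exists_frame (hp : p ≠ 2) (Q : QuadraticForm ℚ_[p] V) (Λ : Submodule ℤ_[p] V)
    (hvertex : ∀ x ∈ Λ, (p : ℤ_[p]) • x ∈ zpDual p Q Λ)
    (hvertex' : zpDual p Q Λ ≤ Λ)
    (htype : zpChainLength p (zpDual p Q Λ) Λ 2)
    (haniso : ∀ x ∈ Λ, Q x ∈ (1 : Submodule ℤ_[p] ℚ_[p]) → x ∈ zpDual p Q Λ) :
    ∃ e ∈ Λ, ∃ f ∈ Λ, ∃ a b : ℤ_[p], IsUnit a ∧ IsUnit b ∧ polar Q e f = 0 ∧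
      (p : ℚ_[p]) * polar Q e e = a ∧ (p : ℚ_[p]) * polar Q f f = b ∧
      (∀ x ∈ Λ, ∃ d ∈ zpDual p Q Λ, ∃ s t : ℤ_[p], x = d + s • e + t • f) ∧
      (∀ s : ℤ_[p], ¬ (p : ℤ_[p]) ∣ a * s ^ 2 + b) := by
  have hself : ∀ x, polar Q x x = 2 * Q x := by
    intro x; simp [polar_self]
  have hpQ : ∀ x ∈ Λ, ∀ y ∈ Λ, ∃ a : ℤ_[p], (p : ℚ_[p]) * polar Q x y = a := by
    intro x hx y hy
    have h1 : polar Q ((p : ℤ_[p]) • x) y ∈ (1 : Submodule ℤ_[p] ℚ_[p]) := hvertex x hx y hy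
    obtain ⟨a, ha⟩ := Submodule.mem_one.1 h1
    rw [polar_zsmul_left] at ha
    exact ⟨a, by simpa using ha.symm⟩
  have hmem : ∀ x ∈ Λ, polar Q x x ∈ (1 : Submodule ℤ_[p] ℚ_[p]) → x ∈ zpDual p Q Λ := by
    intro x hx h
    rw [hself] at h
    exact haniso x hx (mem_one_of_two hp h)
  have hunit : ∀ x ∈ Λ, x ∉ zpDual p Q Λ → ∀ a : ℤ_[p], (p : ℚ_[p]) * polar Q x x = a →
      IsUnit a := by
    intro x hx hx' a ha
    exact isUnit_of_not_dvd fun hd => hx' (hmem x hx (mem_one_of_dvd ha hd))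
  obtain ⟨g, h0, h2, hg⟩ := htype
  have c0 : g 0 ⋖ g 1 := hg 0
  have c1 : g 1 ⋖ g 2 := hg 1
  have h2' : g 2 = Λ := h2
  rw [h0] at c0
  rw [h2'] at c1
  obtain ⟨e, he1, he0⟩ := SetLike.exists_of_lt c0.lt
  obtain ⟨f0, hf2, hf1⟩ := SetLike.exists_of_lt c1.lt
  have heΛ : e ∈ Λ := c1.le he1
  obtain ⟨a, ha⟩ := hpQ e heΛ e heΛ
  have hau := hunit e heΛ he0 a ha
  obtain ⟨m, hm⟩ := hpQ f0 hf2 e heΛ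
  obtain ⟨a', ha'⟩ := hau.exists_left_inv
  have hp0 : (p : ℚ_[p]) ≠ 0 := by exact_mod_cast (Fact.out : p.Prime).ne_zero
  set f : V := f0 - (m * a') • e with hf
  have hfΛ : f ∈ Λ := Λ.sub_mem hf2 (Λ.smul_mem _ heΛ)
  have hf1' : f ∉ g 1 := by
    intro h
    have := (g 1).add_mem h ((g 1).smul_mem (m * a') he1)
    rw [hf, sub_add_cancel] at this
    exact hf1 this
  have hef : polar Q e f = 0 := by
    apply mul_left_cancel₀ hp0
    rw [mul_zero, polar_comm, hf, polar_sub_left, polar_zsmul_left, mul_sub, hm, mul_left_comm,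
      ha]
    have : m - (m * a') * a = 0 := by rw [mul_assoc, ha', mul_one, sub_self]
    rw [← PadicInt.coe_mul, ← PadicInt.coe_sub, this, PadicInt.coe_zero]
  have hf0 : f ∉ zpDual p Q Λ := fun h => hf1' (c0.le h)
  obtain ⟨b, hb⟩ := hpQ f hfΛ f hfΛ
  have hbu := hunit f hfΛ hf0 b hb
  refine ⟨e, heΛ, f, hfΛ, a, b, hau, hbu, hef, ha, hb, ?_, ?_⟩
  · intro x hx
    obtain ⟨y, hy, t, rfl⟩ := covBy_decomp c1 hfΛ hf1' hx
    obtain ⟨d, hd, s, rfl⟩ := covBy_decomp c0 he1 he0 hy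
    exact ⟨d, hd, s, t, rfl⟩
  · intro s hs
    have hfe : polar Q f e = 0 := by rw [polar_comm, hef]
    have h1 : s • e + f ∈ zpDual p Q Λ := by
      refine hmem _ (Λ.add_mem (Λ.smul_mem _ heΛ) hfΛ) (mem_one_of_dvd (a := a * s ^ 2 + b) ?_ hs)
      simp only [polar_add_left, polar_add_right, polar_zsmul_left, polar_zsmul_right, hef, hfe]
      push_cast
      rw [← ha, ← hb]
      ring
    have h2 : polar Q (s • e + f) f ∈ (1 : Submodule ℤ_[p] ℚ_[p]) := h1 f hfΛ
    have h3 : polar Q (s • e + f) f = polar Q f f := by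
      rw [polar_add_left, polar_zsmul_left, hef]; ring
    rw [h3] at h2
    exact hf0 (hmem f hfΛ h2)

end Zp

end S12

section BaseChange

variable (𝔽 : Type*) [Field 𝔽] [CharP 𝔽 p] [IsAlgClosed 𝔽]
variable [Algebra ℚ_[p] (FractionRing (WittVector p 𝔽))]
variable [SMulCommClass ℚ_[p] (WittVector p 𝔽) (FractionRing (WittVector p 𝔽))]

/-- The dual lattice in `K₀ ⊗_{ℚ_p} V` with respect to the base-changed form. -/
noncomputable def wDual
    (QK : QuadraticForm (FractionRing (WittVector p 𝔽))
      (TensorProduct ℚ_[p] (FractionRing (WittVector p 𝔽)) V))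
    (L : Submodule (WittVector p 𝔽) (TensorProduct ℚ_[p] (FractionRing (WittVector p 𝔽)) V)) :
    Submodule (WittVector p 𝔽) (TensorProduct ℚ_[p] (FractionRing (WittVector p 𝔽)) V) :=
  LinearMap.BilinForm.dualSubmodule (QuadraticMap.polarBilin QK) L

/-- `Λ ⊗_{ℤ_p} W₀`, viewed inside `K₀ ⊗_{ℚ_p} V`: the `W₀`-span of the image of `Λ`. -/
noncomputable def baseChangeLattice (Λ : Submodule ℤ_[p] V) :
    Submodule (WittVector p 𝔽) (TensorProduct ℚ_[p] (FractionRing (WittVector p 𝔽)) V) :=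
  Submodule.span (WittVector p 𝔽)
    ((fun v => (1 : FractionRing (WittVector p 𝔽)) ⊗ₜ[ℚ_[p]] v) '' (Λ : Set V))

/-- `Φ_* L`: the `W₀`-span of the image of `L` under `Φ`. -/
noncomputable def phiStar
    (Φ : TensorProduct ℚ_[p] (FractionRing (WittVector p 𝔽)) V ≃+
      TensorProduct ℚ_[p] (FractionRing (WittVector p 𝔽)) V)
    (L : Submodule (WittVector p 𝔽) (TensorProduct ℚ_[p] (FractionRing (WittVector p 𝔽)) V)) :
    Submodule (WittVector p 𝔽) (TensorProduct ℚ_[p] (FractionRing (WittVector p 𝔽)) V) :=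
  Submodule.span (WittVector p 𝔽)
    (⇑Φ '' (L : Set (TensorProduct ℚ_[p] (FractionRing (WittVector p 𝔽)) V)))

namespace S12

section Witt

variable {p : ℕ} [Fact p.Prime]
variable {𝔽 : Type*} [Field 𝔽] [CharP 𝔽 p] [IsAlgClosed 𝔽]

theorem w_dvd_iff (x : WittVector p 𝔽) :
    (p : WittVector p 𝔽) ∣ x ↔ WittVector.constantCoeff x = 0 := by
  rw [← Ideal.mem_span_singleton]
  exact WittVector.mem_span_p_iff_coeff_zero_eq_zero x

theorem w_prime : Prime (p : WittVector p 𝔽) := (WittVector.irreducible p).prime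

theorem w_loc (x : WittVector p 𝔽) : (p : WittVector p 𝔽) ∣ x ∨ IsUnit x := by
  by_cases h : x.coeff 0 = 0
  · exact Or.inl ((w_dvd_iff x).2 h)
  · exact Or.inr (WittVector.isUnit_of_coeff_zero_ne_zero x h)

theorem cc_frob (x : WittVector p 𝔽) :
    WittVector.constantCoeff (WittVector.frobenius x) = WittVector.constantCoeff x ^ p :=
  WittVector.coeff_frobenius_charP p x 0

theorem cc_pow (j : ℤ_[p] →+* WittVector p 𝔽) (a : ℤ_[p]) :
    (WittVector.constantCoeff (j a)) ^ p = WittVector.constantCoeff (j a) := by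
  obtain ⟨n, -, hn⟩ := PadicInt.exists_mem_range a
  rw [PadicInt.maximalIdeal_eq_span_p, Ideal.mem_span_singleton] at hn
  obtain ⟨c, hc⟩ := hn
  have : a = n + p * c := by rw [← hc]; ring
  have h2 : WittVector.constantCoeff (j a) = (n : 𝔽) := by
    rw [this, map_add, map_mul, map_natCast, map_natCast, map_add, map_mul, map_natCast,
      map_natCast, CharP.cast_eq_zero 𝔽 p, zero_mul, add_zero]
  rw [h2]
  exact map_natCast (frobenius 𝔽 p) n

theorem exists_nat_of_pow {x : 𝔽} (hx : x ^ p = x) : ∃ n : ℕ, x = n := by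
  have h1 : x ∈ (⊥ : Subfield 𝔽) := (Subfield.mem_bot_iff_pow_eq_self 𝔽 p).2 hx
  have h2 : x ∈ (ZMod.castHom (dvd_refl p) 𝔽).fieldRange :=
    (bot_le : (⊥ : Subfield 𝔽) ≤ _) h1
  obtain ⟨z, rfl⟩ := h2
  refine ⟨z.val, ?_⟩
  conv_lhs => rw [← ZMod.natCast_zmod_val z]
  rw [map_natCast]

theorem frac_frob (w : WittVector p 𝔽) :
    WittVector.FractionRing.frobenius p 𝔽 (algebraMap _ _ w) =
      algebraMap (WittVector p 𝔽) (FractionRing (WittVector p 𝔽)) (WittVector.frobenius w) := by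
  unfold WittVector.FractionRing.frobenius
  rw [IsFractionRing.ringEquivOfRingEquiv_algebraMap]
  rfl

theorem exists_root (j : ℤ_[p] →+* WittVector p 𝔽) (a b : ℤ_[p]) (ha : IsUnit a) :
    ∃ u : WittVector p 𝔽, (p : WittVector p 𝔽) ∣ j a * u ^ 2 + j b := by
  obtain ⟨z, hz⟩ := IsAlgClosed.exists_pow_nat_eq
    (-(WittVector.constantCoeff (j b)) / WittVector.constantCoeff (j a)) two_pos
  obtain ⟨u, rfl⟩ := WittVector.constantCoeff_surjective (p := p) z
  refine ⟨u, (w_dvd_iff _).2 ?_⟩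
  have hne : WittVector.constantCoeff (j a) ≠ 0 :=
    ((ha.map j).map (WittVector.constantCoeff (p := p) (R := 𝔽))).ne_zero
  rw [map_add, map_mul, map_pow, hz]
  field_simp
  ring

theorem frob_root (j : ℤ_[p] →+* WittVector p 𝔽) (a b : ℤ_[p]) {u : WittVector p 𝔽}
    (hu : (p : WittVector p 𝔽) ∣ j a * u ^ 2 + j b) :
    (p : WittVector p 𝔽) ∣ j a * (WittVector.frobenius u) ^ 2 + j b := by
  rw [w_dvd_iff] at hu ⊢
  rw [map_add, map_mul, map_pow] at hu ⊢
  rw [cc_frob, ← cc_pow j a, ← cc_pow j b, ← pow_mul, mul_comm p 2, pow_mul, ← mul_pow,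
    ← add_pow_char, hu, zero_pow (Fact.out : p.Prime).ne_zero]

theorem frob_ne (j : ℤ_[p] →+* WittVector p 𝔽) (a b : ℤ_[p]) {u : WittVector p 𝔽}
    (hu : (p : WittVector p 𝔽) ∣ j a * u ^ 2 + j b)
    (hab : ∀ s : ℤ_[p], ¬ (p : ℤ_[p]) ∣ a * s ^ 2 + b) :
    ¬ (p : WittVector p 𝔽) ∣ WittVector.frobenius u - u := by
  intro h
  rw [w_dvd_iff, map_sub, cc_frob, sub_eq_zero] at h
  obtain ⟨n, hn⟩ := exists_nat_of_pow h
  refine hab n ?_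
  by_contra hc
  have h1 := (isUnit_of_not_dvd hc).map j
  have h2 : (p : WittVector p 𝔽) ∣ j (a * n ^ 2 + b) := by
    rw [w_dvd_iff] at hu ⊢
    rw [← hu]
    simp only [map_add, map_mul, map_pow, map_natCast, hn]
  exact w_prime.not_isUnit (isUnit_of_dvd_unit h2 h1)

end Witt

section BC

variable {p : ℕ} [Fact p.Prime]
variable {V : Type*} [AddCommGroup V] [Module ℚ_[p] V] [Module ℤ_[p] V]
  [IsScalarTower ℤ_[p] ℚ_[p] V]
variable {𝔽 : Type*} [Field 𝔽] [CharP 𝔽 p] [IsAlgClosed 𝔽]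
variable [Algebra ℚ_[p] (FractionRing (WittVector p 𝔽))]
variable [SMulCommClass ℚ_[p] (WittVector p 𝔽) (FractionRing (WittVector p 𝔽))]

theorem exists_j (hcomp : ∀ c : ℤ_[p],
      algebraMap ℚ_[p] (FractionRing (WittVector p 𝔽)) (algebraMap ℤ_[p] ℚ_[p] c) ∈
        (algebraMap (WittVector p 𝔽) (FractionRing (WittVector p 𝔽))).range) :
    ∃ j : ℤ_[p] →+* WittVector p 𝔽, ∀ c : ℤ_[p],
      algebraMap (WittVector p 𝔽) (FractionRing (WittVector p 𝔽)) (j c) =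
        algebraMap ℚ_[p] (FractionRing (WittVector p 𝔽)) (c : ℚ_[p]) := by
  have hinj : Function.Injective
      (algebraMap (WittVector p 𝔽) (FractionRing (WittVector p 𝔽))) :=
    IsFractionRing.injective _ _
  choose j hj using hcomp
  refine ⟨⟨⟨⟨j, ?_⟩, ?_⟩, ?_, ?_⟩, hj⟩
  · apply hinj; rw [hj]; simp
  · intro x y; apply hinj; simp [hj]
  · apply hinj; change _ = algebraMap _ _ _; simp [hj]
  · intro x y; apply hinj; simp [hj]

variable (j : ℤ_[p] →+* WittVector p 𝔽) (hj : ∀ c : ℤ_[p],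
      algebraMap (WittVector p 𝔽) (FractionRing (WittVector p 𝔽)) (j c) =
        algebraMap ℚ_[p] (FractionRing (WittVector p 𝔽)) (c : ℚ_[p]))
include hj

theorem one_tmul_smul (c : ℤ_[p]) (v : V) :
    (1 : FractionRing (WittVector p 𝔽)) ⊗ₜ[ℚ_[p]] (c • v) =
      j c • ((1 : FractionRing (WittVector p 𝔽)) ⊗ₜ[ℚ_[p]] v) := by
  rw [zsmul_eq, TensorProduct.tmul_smul, TensorProduct.smul_tmul', TensorProduct.smul_tmul',
    Algebra.smul_def, Algebra.smul_def, hj]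

theorem baseChange_span {ι : Type*} (b : ι → V) :
    baseChangeLattice p 𝔽 (Submodule.span ℤ_[p] (Set.range b)) =
      Submodule.span (WittVector p 𝔽)
        (Set.range fun i => (1 : FractionRing (WittVector p 𝔽)) ⊗ₜ[ℚ_[p]] b i) := by
  unfold baseChangeLattice
  apply le_antisymm
  · rw [Submodule.span_le]
    rintro _ ⟨v, hv, rfl⟩
    simp only [SetLike.mem_coe] at hv ⊢
    induction hv using Submodule.span_induction with
    | mem v hv =>
      obtain ⟨i, rfl⟩ := hv
      exact Submodule.subset_span ⟨i, rfl⟩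
    | zero => simp
    | add x y _ _ hx hy => rw [TensorProduct.tmul_add]; exact Submodule.add_mem _ hx hy
    | smul c x _ hx => rw [one_tmul_smul j hj]; exact Submodule.smul_mem _ _ hx
  · apply Submodule.span_mono
    rintro _ ⟨i, rfl⟩
    exact ⟨b i, Submodule.subset_span ⟨i, rfl⟩, rfl⟩

omit [Module ℤ_[p] V] [IsScalarTower ℤ_[p] ℚ_[p] V] [CharP 𝔽 p] [IsAlgClosed 𝔽] hj
  [SMulCommClass ℚ_[p] (WittVector p 𝔽) (FractionRing (WittVector p 𝔽))] in
theorem polar_bc [IsDomain (WittVector p 𝔽)] (Q : QuadraticForm ℚ_[p] V) (x y : V) :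
    QuadraticMap.polarBilin (Q.baseChange (FractionRing (WittVector p 𝔽)))
      ((1 : FractionRing (WittVector p 𝔽)) ⊗ₜ[ℚ_[p]] x)
      ((1 : FractionRing (WittVector p 𝔽)) ⊗ₜ[ℚ_[p]] y) =
      algebraMap ℚ_[p] (FractionRing (WittVector p 𝔽)) (polar Q x y) := by
  rw [polarBilin_apply_apply]
  unfold polar
  rw [← TensorProduct.tmul_add]
  simp only [QuadraticForm.baseChange_tmul, mul_one, Algebra.smul_def, map_sub]

theorem exists_setup (hp : p ≠ 2) [FiniteDimensional ℚ_[p] V]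
    (Q : QuadraticForm ℚ_[p] V)
    (hQ : LinearMap.SeparatingLeft (QuadraticMap.polarBilin Q))
    (Λ : Submodule ℤ_[p] V) (hΛ : IsZpLattice p Λ)
    (hvertex : ∀ x ∈ Λ, (p : ℤ_[p]) • x ∈ zpDual p Q Λ)
    (hvertex' : zpDual p Q Λ ≤ Λ)
    (htype : zpChainLength p (zpDual p Q Λ) Λ 2)
    (haniso : ∀ x ∈ Λ, Q x ∈ (1 : Submodule ℤ_[p] ℚ_[p]) → x ∈ zpDual p Q Λ) :
    ∃ (a b : ℤ_[p]) (e f : V), IsUnit a ∧ (∀ s : ℤ_[p], ¬ (p : ℤ_[p]) ∣ a * s ^ 2 + b) ∧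
      Setup (QuadraticMap.polarBilin (Q.baseChange (FractionRing (WittVector p 𝔽))))
        (baseChangeLattice p 𝔽 (zpDual p Q Λ)) (baseChangeLattice p 𝔽 Λ)
        (p : WittVector p 𝔽) (j a) (j b)
        ((1 : FractionRing (WittVector p 𝔽)) ⊗ₜ[ℚ_[p]] e)
        ((1 : FractionRing (WittVector p 𝔽)) ⊗ₜ[ℚ_[p]] f) := by
  obtain ⟨e, he, f, hf, a, b, hau, hbu, hef, hee, hff, hdec, hab⟩ :=
    exists_frame hp Q Λ hvertex hvertex' htype haniso
  obtain ⟨n, c, c', hc, hc', hcc⟩ := exists_dual_bases Q hQ Λ hΛ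
  have hmem : ∀ (N : Submodule ℤ_[p] V), ∀ x ∈ N,
      (1 : FractionRing (WittVector p 𝔽)) ⊗ₜ[ℚ_[p]] x ∈ baseChangeLattice p 𝔽 N :=
    fun N x hx => Submodule.subset_span ⟨x, hx, rfl⟩
  have hsymm : ∀ x y, QuadraticMap.polarBilin (Q.baseChange (FractionRing (WittVector p 𝔽))) x y =
      QuadraticMap.polarBilin (Q.baseChange (FractionRing (WittVector p 𝔽))) y x := by
    intro x y; simp only [polarBilin_apply_apply]; exact polar_comm _ _ _
  have hD : baseChangeLattice p 𝔽 (zpDual p Q Λ) = Submodule.span (WittVector p 𝔽)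
      (Set.range (Algebra.TensorProduct.basis (FractionRing (WittVector p 𝔽)) c')) := by
    rw [hc', baseChange_span j hj]
    congr 2; ext i; simp
  have hM : baseChangeLattice p 𝔽 Λ = Submodule.span (WittVector p 𝔽)
      (Set.range (Algebra.TensorProduct.basis (FractionRing (WittVector p 𝔽)) c)) := by
    conv_lhs => rw [hc, baseChange_span j hj]
    congr 2; ext i; simp
  have hcc1 : ∀ i k, QuadraticMap.polarBilin (Q.baseChange (FractionRing (WittVector p 𝔽)))
      (Algebra.TensorProduct.basis (FractionRing (WittVector p 𝔽)) c i)
      (Algebra.TensorProduct.basis (FractionRing (WittVector p 𝔽)) c' k) =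
      if i = k then 1 else 0 := by
    intro i k
    rw [Algebra.TensorProduct.basis_apply, Algebra.TensorProduct.basis_apply, polar_bc, hcc]
    split_ifs <;> simp
  have hpp : algebraMap (WittVector p 𝔽) (FractionRing (WittVector p 𝔽)) (p : WittVector p 𝔽) =
      algebraMap ℚ_[p] (FractionRing (WittVector p 𝔽)) (p : ℚ_[p]) := by simp
  have hps : ∀ x : V, (p : WittVector p 𝔽) • ((1 : FractionRing (WittVector p 𝔽)) ⊗ₜ[ℚ_[p]] x) =
      (1 : FractionRing (WittVector p 𝔽)) ⊗ₜ[ℚ_[p]] ((p : ℤ_[p]) • x) := by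
    intro x; rw [one_tmul_smul j hj, map_natCast]
  refine ⟨a, b, e, f, hau, hab, ?_⟩
  exact
    { inj := IsFractionRing.injective _ _
      symm := hsymm
      prime := w_prime
      loc := w_loc
      two := by
        have h2 := (isUnit_two hp).map j
        rwa [← one_add_one_eq_two, map_add, map_one, one_add_one_eq_two] at h2
      dualD := by
        rw [hD, hM]
        exact dual_of_dual_bases _ _ _ hcc1
      dualM := by
        rw [hD, hM]
        refine dual_of_dual_bases _ _ _ fun i k => ?_
        rw [hsymm, hcc1]
        simp only [eq_comm]
      DM := Submodule.span_mono (Set.image_mono hvertex')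
      EM := hmem _ _ he
      FM := hmem _ _ hf
      decomp := by
        intro x hx
        unfold baseChangeLattice at hx
        induction hx using Submodule.span_induction with
        | mem x hx =>
          obtain ⟨v, hv, rfl⟩ := hx
          obtain ⟨d, hd, s, t, rfl⟩ := hdec v hv
          refine ⟨_, hmem _ d hd, j s, j t, ?_⟩
          simp only [TensorProduct.tmul_add, one_tmul_smul j hj]
        | zero => exact ⟨0, Submodule.zero_mem _, 0, 0, by simp⟩
        | add x y _ _ hx hy =>
          obtain ⟨d, hd, s, t, rfl⟩ := hx
          obtain ⟨d', hd', s', t', rfl⟩ := hy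
          exact ⟨d + d', Submodule.add_mem _ hd hd', s + s', t + t', by module⟩
        | smul w x _ hx =>
          obtain ⟨d, hd, s, t, rfl⟩ := hx
          exact ⟨w • d, Submodule.smul_mem _ _ hd, w * s, w * t, by module⟩
      πE := by rw [hps]; exact hmem _ _ (hvertex _ he)
      πF := by rw [hps]; exact hmem _ _ (hvertex _ hf)
      EF := by rw [polar_bc, hef, map_zero]
      EE := by rw [polar_bc, hpp, ← map_mul, hee, hj]
      FF := by rw [polar_bc, hpp, ← map_mul, hff, hj]
      uα := hau.map j
      uβ := hbu.map j }

end BC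

end S12

theorem statement_12 (hp : p ≠ 2) [FiniteDimensional ℚ_[p] V]
    (Q : QuadraticForm ℚ_[p] V)
    (hQ : LinearMap.SeparatingLeft (QuadraticMap.polarBilin Q))
    (Λ : Submodule ℤ_[p] V) (hΛ : IsZpLattice p Λ)
    (hvertex : ∀ x ∈ Λ, (p : ℤ_[p]) • x ∈ zpDual p Q Λ)
    (hvertex' : zpDual p Q Λ ≤ Λ)
    (htype : zpChainLength p (zpDual p Q Λ) Λ 2)
    (haniso : ∀ x ∈ Λ, Q x ∈ (1 : Submodule ℤ_[p] ℚ_[p]) → x ∈ zpDual p Q Λ)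
    -- the embedding `ℚ_p → K₀` restricts to `ℤ_p → W₀`
    (hcomp : ∀ c : ℤ_[p],
      algebraMap ℚ_[p] (FractionRing (WittVector p 𝔽)) (algebraMap ℤ_[p] ℚ_[p] c) ∈
        (algebraMap (WittVector p 𝔽) (FractionRing (WittVector p 𝔽))).range)
    -- `Φ = id_V ⊗ σ`, with `σ` the Frobenius of `K₀`: a `σ`-semilinear additive bijection
    -- acting as `a ⊗ v ↦ σ a ⊗ v` on pure tensors
    (Φ : TensorProduct ℚ_[p] (FractionRing (WittVector p 𝔽)) V ≃+
      TensorProduct ℚ_[p] (FractionRing (WittVector p 𝔽)) V)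
    (hΦ : ∀ (a : FractionRing (WittVector p 𝔽)) (v : V),
      Φ (a ⊗ₜ[ℚ_[p]] v) = (WittVector.FractionRing.frobenius p 𝔽 a) ⊗ₜ[ℚ_[p]] v)
    (hΦsemi : ∀ (a : FractionRing (WittVector p 𝔽))
      (w : TensorProduct ℚ_[p] (FractionRing (WittVector p 𝔽)) V),
      Φ (a • w) = WittVector.FractionRing.frobenius p 𝔽 a • Φ w) :
    ∃ L₁ L₂ :
        Submodule (WittVector p 𝔽) (TensorProduct ℚ_[p] (FractionRing (WittVector p 𝔽)) V),
      L₁ ≠ L₂ ∧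
      (∀ L : Submodule (WittVector p 𝔽) (TensorProduct ℚ_[p] (FractionRing (WittVector p 𝔽)) V),
        (wDual p 𝔽 (Q.baseChange (FractionRing (WittVector p 𝔽))) L = L ∧
          baseChangeLattice p 𝔽 (zpDual p Q Λ) ≤ L ∧ L ≤ baseChangeLattice p 𝔽 Λ) ↔
          (L = L₁ ∨ L = L₂)) ∧
      phiStar p 𝔽 Φ L₁ = L₂ ∧ phiStar p 𝔽 Φ L₂ = L₁ := by
  obtain ⟨j, hj⟩ := S12.exists_j hcomp
  obtain ⟨a, b, e, f, hau, hab, h⟩ := S12.exists_setup (𝔽 := 𝔽) j hj hp Q hQ Λ hΛ hvertex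
    hvertex' htype haniso
  obtain ⟨u, hu⟩ := S12.exists_root (𝔽 := 𝔽) j a b hau
  have hσ : (p : WittVector p 𝔽) ∣ WittVector.frobenius u - -u := by
    have h1 := S12.frob_root j a b hu
    rcases h.root hu (s := WittVector.frobenius u) (t := 1) (by simpa using h1) with hc | hc
    · exact absurd (by simpa using hc) (S12.frob_ne j a b hu hab)
    · simpa using hc
  have hΦW : ∀ (w : WittVector p 𝔽)
      (x : TensorProduct ℚ_[p] (FractionRing (WittVector p 𝔽)) V),
      Φ.toAddMonoidHom (w • x) = (WittVector.frobenius w) • Φ.toAddMonoidHom x := by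
    intro w x
    have := hΦsemi (algebraMap _ _ w) x
    rw [S12.frac_frob, algebraMap_smul, algebraMap_smul] at this
    exact this
  have hfix : ∀ v : V, Φ.toAddMonoidHom ((1 : FractionRing (WittVector p 𝔽)) ⊗ₜ[ℚ_[p]] v) =
      (1 : FractionRing (WittVector p 𝔽)) ⊗ₜ[ℚ_[p]] v := by
    intro v
    have := hΦ 1 v
    rw [map_one] at this
    exact this
  have hphi : ∀ v : WittVector p 𝔽,
      phiStar p 𝔽 Φ (S12.Lat (baseChangeLattice p 𝔽 (zpDual p Q Λ))
        ((1 : FractionRing (WittVector p 𝔽)) ⊗ₜ[ℚ_[p]] e)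
        ((1 : FractionRing (WittVector p 𝔽)) ⊗ₜ[ℚ_[p]] f) v) =
      S12.Lat (baseChangeLattice p 𝔽 (zpDual p Q Λ))
        ((1 : FractionRing (WittVector p 𝔽)) ⊗ₜ[ℚ_[p]] e)
        ((1 : FractionRing (WittVector p 𝔽)) ⊗ₜ[ℚ_[p]] f) (WittVector.frobenius v) := by
    intro v
    refine S12.phi_Lat WittVector.frobenius Φ.toAddMonoidHom hΦW _ ?_ _ _ (hfix e) (hfix f) v
    rintro _ ⟨x, -, rfl⟩
    exact hfix x
  refine ⟨_, _, h.ne hu, h.classify hu, ?_, ?_⟩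
  · rw [hphi]
    exact h.congr hσ
  · rw [hphi]
    refine h.congr ?_
    rw [map_neg]
    have := (dvd_neg.2 hσ)
    convert this using 1
    ring

end BaseChange
end
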